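/- arXiv:1507.08089 — 2 statements merged into one kernel-verified Lean document; each statement's English description precedes it below -/
import Mathlib

section
/- Let p ∈ P^log with 1 < p^- ≤ p^+ < ∞ and h ∈ ℝ^n. Then for all f ∈ L^{p(·)}(ℝ^n) ∩ S'(ℝ^n) with supp 𝓕f ⊂ {ξ : |ξ| ≤ 2^{v+1}}, v ∈ ℕ₀, the translation operator τ_h f := f(· + h) satisfies ‖τ_h f‖_{p(·)} ≤ c · exp((2 + 2^{vn}|h|) c_log(p)) ‖f‖_{p(·)}, where c > 0 is independent of h and v. -/
/-!
A function `f` band-limited to `‖ξ‖ ≤ R` is reproduced by a kernel of `L¹` norm `O(1)` and sup norm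
`O(R ^ n)`. If `f` has modular at most `1` at scale `μ`, then `∫ (|f| - μ)⁺ ≤ μ`, so the reproducing
formula yields the Nikolskii-type bound `|f| / μ ≤ K * R ^ n`. For `t ≤ K * R ^ n`, log-Hölder
continuity and decay make `t ^ p x` and `t ^ p (x + h)` comparable up to a factor
`C * (1 + R * ‖h‖) ^ N`, after adding the integrable weight `(1 + ‖x + h‖) ^ (-(n + 1))` to absorb
the small values of `t`. Translation therefore costs a polynomial in `R * ‖h‖`, which is dominated
by an exponential with any positive rate; if the rate vanishes, then `p` is constant and translation
is an isometry.
-/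

open MeasureTheory ENNReal SchwartzMap

/-- The Luxemburg (quasi-)norm of the variable Lebesgue space `L^{p(·)}`. -/
noncomputable def luxNorm {n : ℕ} (p : EuclideanSpace ℝ (Fin n) → ℝ)
    (f : EuclideanSpace ℝ (Fin n) → ℂ) : ℝ≥0∞ :=
  sInf {μ : ℝ≥0∞ | 0 < μ ∧ ∫⁻ x, ((‖f x‖₊ : ℝ≥0∞) / μ) ^ p x ≤ 1}

section LogHolder

variable {V : Type*} [NormedAddCommGroup V] {a c P K l m R : ℝ} {p α : V → ℝ}

/-- Local log-Hölder continuity with constant `c`: `|α x - α y| ≤ c / log (e + 1 / |x - y|)`.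
On the diagonal `1 / 0 = 0`, so there the condition only says `0 ≤ c`. -/
def IsLocallyLogHolder (c : ℝ) (α : V → ℝ) : Prop :=
  ∀ x y, |α x - α y| ≤ c / Real.log (Real.exp 1 + 1 / ‖x - y‖)

/-- The log-Hölder decay condition at infinity with constant `c` and limit `l`:
`|α x - l| ≤ c / log (e + |x|)`. -/
def HasLogHolderDecay (c : ℝ) (α : V → ℝ) (l : ℝ) : Prop :=
  ∀ x, |α x - l| ≤ c / Real.log (Real.exp 1 + ‖x‖)

theorem one_le_log_exp_one_add {r : ℝ} (hr : 0 ≤ r) : 1 ≤ Real.log (Real.exp 1 + r) := by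
  rw [Real.le_log_iff_exp_le (by positivity)]
  exact le_add_of_nonneg_right hr

theorem rpow_le_exp_of_le_div_log {b δ : ℝ} (hb : 1 < b) (hδ : δ ≤ c / Real.log b) :
    b ^ δ ≤ Real.exp c := by
  rw [Real.rpow_def_of_pos (one_pos.trans hb), mul_comm]
  exact Real.exp_le_exp.2 ((le_div_iff₀ (Real.log_pos hb)).1 hδ)

theorem IsLocallyLogHolder.const_nonneg (hα : IsLocallyLogHolder c α) : 0 ≤ c := by
  simpa using hα 0 0

theorem HasLogHolderDecay.const_nonneg (hα : HasLogHolderDecay c α l) : 0 ≤ c := by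
  simpa using (abs_nonneg _).trans (hα 0)

theorem IsLocallyLogHolder.one_div (hp : IsLocallyLogHolder c p) (hp1 : ∀ x, 1 ≤ p x) :
    IsLocallyLogHolder c fun x => 1 / p x := fun x y => by
  have hx : 0 < p x := one_pos.trans_le (hp1 x)
  have hy : 0 < p y := one_pos.trans_le (hp1 y)
  refine le_trans ?_ (hp x y)
  rw [div_sub_div _ _ hx.ne' hy.ne', one_mul, mul_one, abs_div, abs_sub_comm,
    abs_of_pos (mul_pos hx hy)]
  exact div_le_self (abs_nonneg _) (one_le_mul_of_one_le_of_one_le (hp1 x) (hp1 y))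

theorem abs_sub_le_sq_mul_abs_one_div_sub {a b : ℝ} (ha : 0 < a) (haP : a ≤ P) (hb : 0 < b)
    (hbP : b ≤ P) : |a - b| ≤ |1 / a - 1 / b| * P ^ 2 := by
  have hab : |a - b| = |1 / a - 1 / b| * (a * b) := by
    rw [← abs_of_pos (mul_pos ha hb), ← abs_mul, abs_sub_comm]
    congr 1
    field_simp
  rw [hab, sq]
  gcongr
  exact ha.le.trans haP

theorem IsLocallyLogHolder.rpow_abs_sub_le (hα : IsLocallyLogHolder c α) {x y : V}
    (hxy : |α x - α y| ≤ 1) (hR : 1 ≤ R) :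
    R ^ |α x - α y| ≤ Real.exp c * (1 + R * ‖x - y‖) := by
  rcases eq_or_ne x y with rfl | hne
  · simpa using Real.one_le_exp hα.const_nonneg
  have hr : 0 < ‖x - y‖ := norm_pos_iff.2 (sub_ne_zero.2 hne)
  have he : 1 < Real.exp 1 + 1 / ‖x - y‖ :=
    (Real.one_lt_exp_iff.2 one_pos).trans (lt_add_of_pos_right _ (by positivity))
  have hRle : R ≤ (Real.exp 1 + 1 / ‖x - y‖) * (1 + R * ‖x - y‖) :=
    calc R = 1 / ‖x - y‖ * (R * ‖x - y‖) := by field_simp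
      _ ≤ _ := by
        gcongr
        · exact le_add_of_nonneg_left (Real.exp_pos 1).le
        · exact le_add_of_nonneg_left zero_le_one
  calc R ^ |α x - α y|
      ≤ ((Real.exp 1 + 1 / ‖x - y‖) * (1 + R * ‖x - y‖)) ^ |α x - α y| := by gcongr
    _ = (Real.exp 1 + 1 / ‖x - y‖) ^ |α x - α y| * (1 + R * ‖x - y‖) ^ |α x - α y| :=
        Real.mul_rpow (by positivity) (by positivity)
    _ ≤ Real.exp c * (1 + R * ‖x - y‖) := by
        gcongr
        · exact rpow_le_exp_of_le_div_log he (hα x y)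
        · exact Real.rpow_le_self_of_one_le (le_add_of_nonneg_right (by positivity)) hxy

theorem HasLogHolderDecay.rpow_abs_sub_le (hα : HasLogHolderDecay c α l) (x y : V) :
    (1 + ‖y‖) ^ |α x - α y| ≤ Real.exp (2 * c) * (1 + ‖x - y‖) ^ c := by
  have hc := hα.const_nonneg
  have he : 1 < Real.exp 1 := Real.one_lt_exp_iff.2 one_pos
  set X := Real.log (Real.exp 1 + ‖x‖)
  set Y := Real.log (Real.exp 1 + ‖y‖)
  have hX : 1 ≤ X := one_le_log_exp_one_add (norm_nonneg x)
  have hδ : |α x - α y| ≤ c / X + c / Y :=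
    (abs_sub_le _ l _).trans (add_le_add (hα x) (abs_sub_comm l (α y) ▸ hα y))
  have hbase (z : V) : 1 < Real.exp 1 + ‖z‖ := lt_add_of_lt_of_nonneg he (norm_nonneg z)
  have htri : Real.exp 1 + ‖y‖ ≤ (Real.exp 1 + ‖x‖) * (1 + ‖x - y‖) := by
    have := norm_le_norm_add_norm_sub' y x
    rw [norm_sub_rev] at this
    nlinarith [mul_nonneg (norm_nonneg x) (norm_nonneg (x - y)), norm_nonneg (x - y)]
  calc (1 + ‖y‖) ^ |α x - α y|
      ≤ (Real.exp 1 + ‖y‖) ^ |α x - α y| := by gcongr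
    _ ≤ (Real.exp 1 + ‖y‖) ^ (c / X + c / Y) :=
        Real.rpow_le_rpow_of_exponent_le (hbase y).le hδ
    _ = (Real.exp 1 + ‖y‖) ^ (c / X) * (Real.exp 1 + ‖y‖) ^ (c / Y) :=
        Real.rpow_add (by positivity) _ _
    _ ≤ ((Real.exp 1 + ‖x‖) * (1 + ‖x - y‖)) ^ (c / X) * Real.exp c := by
        gcongr
        exact rpow_le_exp_of_le_div_log (hbase y) le_rfl
    _ = (Real.exp 1 + ‖x‖) ^ (c / X) * (1 + ‖x - y‖) ^ (c / X) * Real.exp c := by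
        rw [Real.mul_rpow (by positivity) (by positivity)]
    _ ≤ Real.exp c * (1 + ‖x - y‖) ^ c * Real.exp c := by
        gcongr
        · exact rpow_le_exp_of_le_div_log (hbase x) le_rfl
        · exact le_add_of_nonneg_right (norm_nonneg _)
        · exact div_le_self hc hX
    _ = Real.exp (2 * c) * (1 + ‖x - y‖) ^ c := by
        rw [two_mul, Real.exp_add]
        ring

theorem IsLocallyLogHolder.mul_rpow_abs_sub_le (hlog : IsLocallyLogHolder a α)
    (hdecay : HasLogHolderDecay c α l) {x y : V} (hxy : |α x - α y| ≤ 1) (hK : 1 ≤ K) (hR : 1 ≤ R)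
    (d : ℕ) (hm : 0 ≤ m) :
    (K * R ^ d * (1 + ‖y‖) ^ m) ^ |α x - α y| ≤
      K * Real.exp a ^ d * Real.exp (2 * c) ^ m * (1 + R * ‖x - y‖) ^ (d + c * m) := by
  have hc := hdecay.const_nonneg
  have hK0 : 0 < K := one_pos.trans_le hK
  have hR0 : 0 < R := one_pos.trans_le hR
  set δ := |α x - α y|
  set s := 1 + R * ‖x - y‖
  have hs : 0 < s := by positivity
  have hxys : 1 + ‖x - y‖ ≤ s := add_le_add_right (le_mul_of_one_le_left (norm_nonneg _) hR) 1
  calc (K * R ^ d * (1 + ‖y‖) ^ m) ^ δ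
      = K ^ δ * (R ^ δ) ^ d * ((1 + ‖y‖) ^ δ) ^ m := by
        rw [Real.mul_rpow (by positivity) (by positivity), Real.mul_rpow hK0.le (by positivity),
          ← Real.rpow_pow_comm hR0.le, ← Real.rpow_mul (by positivity), mul_comm m,
          Real.rpow_mul (by positivity)]
    _ ≤ K * (Real.exp a * s) ^ d * (Real.exp (2 * c) * s ^ c) ^ m := by
        gcongr
        · exact Real.rpow_le_self_of_one_le hK hxy
        · exact hlog.rpow_abs_sub_le hxy hR
        · exact (hdecay.rpow_abs_sub_le x y).trans (by gcongr)
    _ = K * Real.exp a ^ d * Real.exp (2 * c) ^ m * s ^ (d + c * m) := by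
        rw [mul_pow, Real.mul_rpow (by positivity) (by positivity), ← Real.rpow_mul hs.le,
          Real.rpow_add hs, Real.rpow_natCast]
        ring

theorem exists_mul_rpow_abs_sub_le_of_one_div (hp1 : ∀ x, 1 ≤ p x) (hpP : ∀ x, p x ≤ P)
    (hlog : IsLocallyLogHolder a fun x => 1 / p x)
    (hdecay : HasLogHolderDecay c (fun x => 1 / p x) l) (hK : 1 ≤ K) (d : ℕ) (hm : 0 ≤ m) :
    ∃ C N : ℝ, 0 ≤ N ∧ ∀ R : ℝ, 1 ≤ R → ∀ x y : V,
      (K * R ^ d * (1 + ‖y‖) ^ m) ^ |p x - p y| ≤ C * (1 + R * ‖x - y‖) ^ N := by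
  have hc := hdecay.const_nonneg
  refine ⟨(K * Real.exp a ^ d * Real.exp (2 * c) ^ m) ^ P ^ 2, (d + c * m) * P ^ 2,
    by positivity, fun R hR x y => ?_⟩
  have hp0 (z : V) : 0 < p z := one_pos.trans_le (hp1 z)
  have hdiff : |1 / p x - 1 / p y| ≤ 1 :=
    abs_sub_le_of_nonneg_of_le (one_div_nonneg.2 (hp0 x).le) (div_le_one_of_le₀ (hp1 x) (hp0 x).le)
      (one_div_nonneg.2 (hp0 y).le) (div_le_one_of_le₀ (hp1 y) (hp0 y).le)
  have hT : 1 ≤ K * R ^ d * (1 + ‖y‖) ^ m :=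
    one_le_mul_of_one_le_of_one_le (one_le_mul_of_one_le_of_one_le hK (one_le_pow₀ hR))
      (Real.one_le_rpow (le_add_of_nonneg_right (norm_nonneg y)) hm)
  calc (K * R ^ d * (1 + ‖y‖) ^ m) ^ |p x - p y|
      ≤ (K * R ^ d * (1 + ‖y‖) ^ m) ^ (|1 / p x - 1 / p y| * P ^ 2) :=
        Real.rpow_le_rpow_of_exponent_le hT
          (abs_sub_le_sq_mul_abs_one_div_sub (hp0 x) (hpP x) (hp0 y) (hpP y))
    _ = ((K * R ^ d * (1 + ‖y‖) ^ m) ^ |1 / p x - 1 / p y|) ^ P ^ 2 :=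
        Real.rpow_mul (by positivity) _ _
    _ ≤ (K * Real.exp a ^ d * Real.exp (2 * c) ^ m * (1 + R * ‖x - y‖) ^ (d + c * m)) ^ P ^ 2 := by
        gcongr
        exact hlog.mul_rpow_abs_sub_le hdecay hdiff hK hR d hm
    _ = _ := by
        rw [Real.mul_rpow (by positivity) (by positivity), ← Real.rpow_mul (by positivity)]

end LogHolder

section Modular

theorem rpow_le_rpow_abs_sub_mul_add {t L w : ℝ≥0∞} {a : ℝ} (b : ℝ) (ha : 1 ≤ a) (htL : t ≤ L)
    (hL1 : 1 ≤ L) (hL : L ≠ ⊤) (hw : w ≤ 1) : t ^ a ≤ (L * w⁻¹) ^ |a - b| * (t ^ b + w) := by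
  have hw1 : 1 ≤ w⁻¹ := ENNReal.one_le_inv.2 hw
  rcases le_or_gt t w with htw | htw
  · calc t ^ a ≤ t := ENNReal.rpow_le_self_of_le_one (htw.trans hw) ha
      _ ≤ t ^ b + w := htw.trans le_add_self
      _ ≤ (L * w⁻¹) ^ |a - b| * (t ^ b + w) := le_mul_of_one_le_left'
          (ENNReal.one_rpow _ ▸ ENNReal.rpow_le_rpow (one_le_mul hL1 hw1) (abs_nonneg _))
  have ht0 : t ≠ 0 := (zero_le.trans_lt htw).ne'
  have ht : t ≠ ⊤ := (htL.trans_lt hL.lt_top).ne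
  have hab : t ^ (a - b) ≤ (L * w⁻¹) ^ |a - b| := by
    rcases abs_cases (a - b) with ⟨h, h0⟩ | ⟨h, h0⟩
    · rw [h]
      exact ENNReal.rpow_le_rpow (htL.trans (le_mul_of_one_le_right' hw1)) h0
    · rw [h, ← neg_neg (a - b), ENNReal.rpow_neg, ← ENNReal.inv_rpow, neg_neg]
      exact ENNReal.rpow_le_rpow
        ((ENNReal.inv_le_inv.2 htw.le).trans (le_mul_of_one_le_left' hL1)) (by linarith)
  calc t ^ a = t ^ (a - b) * t ^ b := by rw [← ENNReal.rpow_add _ _ ht0 ht, sub_add_cancel]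
    _ ≤ (L * w⁻¹) ^ |a - b| * (t ^ b + w) := mul_le_mul' hab le_self_add

theorem lintegral_rpow_comp_add_right_le {G : Type*} [AddGroup G] [MeasurableSpace G]
    [MeasurableAdd G] {μ : Measure G} [μ.IsAddRightInvariant] {p : G → ℝ} {u w : G → ℝ≥0∞}
    {A L : ℝ≥0∞} (hp : ∀ x, 1 ≤ p x) (hu : ∀ᵐ x ∂μ, u x ≤ L) (hL1 : 1 ≤ L) (hL : L ≠ ⊤)
    (hw : Measurable w) (hw1 : ∀ x, w x ≤ 1) (h : G) (hA : A ≠ ⊤)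
    (hpA : ∀ x, (L * (w (x + h))⁻¹) ^ |p x - p (x + h)| ≤ A) :
    ∫⁻ x, u (x + h) ^ p x ∂μ ≤ A * (∫⁻ x, u x ^ p x ∂μ + ∫⁻ x, w x ∂μ) := by
  calc ∫⁻ x, u (x + h) ^ p x ∂μ
      ≤ ∫⁻ x, A * (u (x + h) ^ p (x + h) + w (x + h)) ∂μ := by
        refine lintegral_mono_ae ?_
        filter_upwards [(measurePreserving_add_right μ h).quasiMeasurePreserving.ae hu] with x hx
        exact (rpow_le_rpow_abs_sub_mul_add _ (hp x) hx hL1 hL (hw1 _)).trans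
          (mul_le_mul' (hpA x) le_rfl)
    _ = A * (∫⁻ x, u x ^ p x ∂μ + ∫⁻ x, w x ∂μ) := by
        rw [lintegral_const_mul' _ _ hA,
          lintegral_add_right_eq_self (fun x => u x ^ p x + w x) h, lintegral_add_right _ hw]

theorem lintegral_tsub_le_of_lintegral_rpow_le_one {α : Type*} [MeasurableSpace α] {μ : Measure α}
    {p : α → ℝ} {u : α → ℝ≥0∞} {s : ℝ≥0∞} (hp : ∀ x, 1 ≤ p x) (hs0 : s ≠ 0) (hs : s ≠ ⊤)
    (hu : ∫⁻ x, (u x / s) ^ p x ∂μ ≤ 1) : ∫⁻ x, (u x - s) ∂μ ≤ s := by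
  calc ∫⁻ x, (u x - s) ∂μ ≤ ∫⁻ x, s * (u x / s) ^ p x ∂μ := by
        refine lintegral_mono fun x => ?_
        rcases le_total (u x) s with h | h
        · simp [tsub_eq_zero_of_le h]
        calc u x - s ≤ s * (u x / s) := tsub_le_self.trans_eq (ENNReal.mul_div_cancel hs0 hs).symm
          _ ≤ s * (u x / s) ^ p x := by
            gcongr
            refine ENNReal.le_rpow_self_of_one_le ?_ (hp x)
            rwa [ENNReal.le_div_iff_mul_le (Or.inl hs0) (Or.inl hs), one_mul]
    _ = s * ∫⁻ x, (u x / s) ^ p x ∂μ := lintegral_const_mul' _ _ hs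
    _ ≤ s := mul_le_of_le_one_right' hu

variable {n : ℕ} {p : EuclideanSpace ℝ (Fin n) → ℝ} {f g : EuclideanSpace ℝ (Fin n) → ℂ}

theorem luxNorm_le_mul_of_lintegral_rpow_le (hp : ∀ x, 1 ≤ p x) {μ B : ℝ≥0∞} (hμ0 : μ ≠ 0)
    (hB1 : 1 ≤ B) (hB : B ≠ ⊤) (hg : ∫⁻ x, (‖g x‖ₑ / μ) ^ p x ≤ B) : luxNorm p g ≤ B * μ := by
  have hB0 : B ≠ 0 := (one_pos.trans_le hB1).ne'
  refine sInf_le ⟨ENNReal.mul_pos hB0 hμ0, ?_⟩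
  calc ∫⁻ x, (‖g x‖ₑ / (B * μ)) ^ p x ≤ ∫⁻ x, B⁻¹ * (‖g x‖ₑ / μ) ^ p x := by
        refine lintegral_mono fun x => ?_
        have hdiv : ‖g x‖ₑ / (B * μ) = B⁻¹ * (‖g x‖ₑ / μ) := by
          rw [div_eq_mul_inv, div_eq_mul_inv, ENNReal.mul_inv (Or.inl hB0) (Or.inl hB)]
          ring
        rw [hdiv, ENNReal.mul_rpow_of_nonneg _ _ (zero_le_one.trans (hp x))]
        gcongr
        exact ENNReal.rpow_le_self_of_le_one (ENNReal.inv_le_one.2 hB1) (hp x)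
    _ = B⁻¹ * ∫⁻ x, (‖g x‖ₑ / μ) ^ p x := lintegral_const_mul' _ _ (ENNReal.inv_ne_top.2 hB0)
    _ ≤ B⁻¹ * B := by gcongr
    _ = 1 := ENNReal.inv_mul_cancel hB0 hB

theorem luxNorm_le_mul_luxNorm (hp : ∀ x, 1 ≤ p x) {B : ℝ≥0∞} (hB1 : 1 ≤ B) (hB : B ≠ ⊤)
    (h : ∀ μ : ℝ≥0∞, μ ≠ 0 → μ ≠ ⊤ → ∫⁻ x, (‖f x‖ₑ / μ) ^ p x ≤ 1 →
      ∫⁻ x, (‖g x‖ₑ / μ) ^ p x ≤ B) : luxNorm p g ≤ B * luxNorm p f := by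
  have hB0 : B ≠ 0 := (one_pos.trans_le hB1).ne'
  rw [mul_comm, ← ENNReal.div_le_iff hB0 hB]
  refine le_sInf fun μ ⟨hμ0, hμ⟩ => ?_
  rw [ENNReal.div_le_iff hB0 hB, mul_comm]
  rcases eq_or_ne μ ⊤ with rfl | hμt
  · simp [ENNReal.mul_top hB0]
  · exact luxNorm_le_mul_of_lintegral_rpow_le hp hμ0.ne' hB1 hB (h μ hμ0.ne' hμt hμ)

theorem luxNorm_comp_add_right_le {w : EuclideanSpace ℝ (Fin n) → ℝ≥0∞} {A L : ℝ≥0∞}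
    (hp : ∀ x, 1 ≤ p x)
    (hL : ∀ μ : ℝ≥0∞, μ ≠ 0 → μ ≠ ⊤ → ∫⁻ x, (‖f x‖ₑ / μ) ^ p x ≤ 1 → ∀ᵐ x, ‖f x‖ₑ / μ ≤ L)
    (hL1 : 1 ≤ L) (hLt : L ≠ ⊤) (hw : Measurable w) (hw1 : ∀ x, w x ≤ 1) (hwint : ∫⁻ x, w x ≠ ⊤)
    (h : EuclideanSpace ℝ (Fin n)) (hA1 : 1 ≤ A) (hA : A ≠ ⊤)
    (hpA : ∀ x, (L * (w (x + h))⁻¹) ^ |p x - p (x + h)| ≤ A) :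
    luxNorm p (fun x => f (x + h)) ≤ A * (1 + ∫⁻ x, w x) * luxNorm p f := by
  refine luxNorm_le_mul_luxNorm hp (one_le_mul hA1 le_self_add) (by finiteness)
    fun μ hμ0 hμ hmod => ?_
  calc ∫⁻ x, (‖f (x + h)‖ₑ / μ) ^ p x
      ≤ A * ((∫⁻ x, (‖f x‖ₑ / μ) ^ p x) + ∫⁻ x, w x) :=
        lintegral_rpow_comp_add_right_le hp (hL μ hμ0 hμ hmod) hL1 hLt hw hw1 h hA hpA
    _ ≤ A * (1 + ∫⁻ x, w x) := by gcongr

theorem luxNorm_comp_add_right_of_const {q : ℝ} (hp : ∀ x, p x = q)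
    (h : EuclideanSpace ℝ (Fin n)) : luxNorm p (fun x => f (x + h)) = luxNorm p f := by
  simp only [luxNorm, hp]
  congr! 4 with μ
  rw [lintegral_add_right_eq_self (fun x => ((‖f x‖₊ : ℝ≥0∞) / μ) ^ q) h]

end Modular

theorem exists_one_add_rpow_le_mul_exp {ε N : ℝ} (hε : 0 < ε) (hN : 0 ≤ N) :
    ∃ C > 0, ∀ r : ℝ, 0 ≤ r → (1 + r) ^ N ≤ C * Real.exp (ε * r) := by
  set η := ε / (N + 1) with hη
  have hη0 : 0 < η := by positivity
  refine ⟨(1 + η⁻¹) ^ N, by positivity, fun r hr => ?_⟩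
  have hlin : 1 + r ≤ (1 + η⁻¹) * Real.exp (η * r) :=
    calc 1 + r ≤ (1 + η⁻¹) * (η * r + 1) := by
          have hexpand : (1 + η⁻¹) * (η * r + 1) = 1 + r + (η * r + η⁻¹) := by
            field_simp
            ring
          rw [hexpand]
          exact le_add_of_nonneg_right (by positivity)
      _ ≤ (1 + η⁻¹) * Real.exp (η * r) := by
          gcongr
          exact Real.add_one_le_exp _
  calc (1 + r) ^ N ≤ ((1 + η⁻¹) * Real.exp (η * r)) ^ N := by gcongr
    _ = (1 + η⁻¹) ^ N * Real.exp (η * N * r) := by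
        rw [Real.mul_rpow (by positivity) (by positivity), ← Real.exp_mul]
        ring_nf
    _ ≤ (1 + η⁻¹) ^ N * Real.exp (ε * r) := by
        gcongr
        rw [hη, div_mul_eq_mul_div, div_le_iff₀ (by positivity)]
        nlinarith

section Bandlimited

open FourierTransform
open scoped NNReal

theorem lintegral_comp_const_smul {E : Type*} [NormedAddCommGroup E] [NormedSpace ℝ E]
    [FiniteDimensional ℝ E] [MeasurableSpace E] [BorelSpace E] (μ : Measure E) [μ.IsAddHaarMeasure]
    (f : E → ℝ≥0∞) {r : ℝ} (hr : r ≠ 0) :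
    ∫⁻ x, f (r • x) ∂μ =
      ENNReal.ofReal |(r ^ Module.finrank ℝ E)⁻¹| * ∫⁻ x, f x ∂μ := by
  rw [← smul_eq_mul, ← lintegral_smul_measure, ← Measure.map_addHaar_smul μ hr]
  exact (lintegral_map_equiv f (Homeomorph.smulOfNeZero r hr).toMeasurableEquiv).symm

theorem exists_enorm_schwartzMap_le {D E : Type*} [NormedAddCommGroup D] [NormedSpace ℝ D]
    [NormedAddCommGroup E] [NormedSpace ℝ E] (g : 𝓢(D, E)) : ∃ C : ℝ≥0, ∀ x, ‖g x‖ₑ ≤ C :=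
  ⟨‖g.toBoundedContinuousFunction‖₊, fun x =>
    enorm_le_coe.2 (g.toBoundedContinuousFunction.nnnorm_coe_le_nnnorm x)⟩

variable {V : Type*} [NormedAddCommGroup V] [InnerProductSpace ℝ V] [FiniteDimensional ℝ V]
  [MeasurableSpace V] [BorelSpace V] {F : V → ℂ} {R : ℝ} {s : ℝ≥0∞} {k : 𝓢(V, ℂ)}

/-- `F` is band-limited to the closed ball of radius `R`: as a distribution, its Fourier transform
vanishes against every Schwartz function supported outside that ball. -/
def IsBandlimited (R : ℝ) (F : V → ℂ) : Prop :=
  ∀ φ : 𝓢(V, ℂ), (∀ ξ ∈ tsupport φ, R < ‖ξ‖) → ∫ x, F x * 𝓕 φ x = 0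

theorem fourier_comp_const_smul {E : Type*} [NormedAddCommGroup E] [NormedSpace ℂ E] (f : V → E)
    {r : ℝ} (hr : r ≠ 0) (ξ : V) :
    𝓕 (fun x => f (r • x)) ξ = |(r ^ Module.finrank ℝ V)⁻¹| • 𝓕 f (r⁻¹ • ξ) := by
  rw [Real.fourier_eq, Real.fourier_eq, ← Measure.integral_comp_smul]
  simp only [real_inner_smul_left, real_inner_smul_right, inv_mul_cancel_left₀ hr]

theorem exists_fourier_eq_one_on_closedBall {r : ℝ} (hr : 0 < r) :
    ∃ k : 𝓢(V, ℂ), ∀ ξ : V, ‖ξ‖ ≤ r → 𝓕 k ξ = 1 := by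
  let b : ContDiffBump (0 : V) := ⟨r, r + 1, hr, lt_add_one r⟩
  have hsupp : HasCompactSupport fun x => (b x : ℂ) :=
    b.hasCompactSupport.comp_left Complex.ofReal_zero
  have hsmooth : ContDiff ℝ (⊤ : ℕ∞) fun x => (b x : ℂ) :=
    Complex.ofRealCLM.contDiff.comp b.contDiff
  refine ⟨𝓕⁻ (hsupp.toSchwartzMap hsmooth), fun ξ hξ => ?_⟩
  rw [FourierTransform.fourier_fourierInv_eq]
  simpa using b.one_of_mem_closedBall (by simpa using hξ)

variable (V) in
theorem exists_kernel_fourier_eq_one : ∃ A : ℝ≥0, ∀ R : ℝ, 0 < R → ∃ k : 𝓢(V, ℂ),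
    (∀ x, ‖k x‖ₑ ≤ A * ENNReal.ofReal (R ^ Module.finrank ℝ V)) ∧ ∫⁻ x, ‖k x‖ₑ ≤ A ∧
    ∀ ξ : V, ‖ξ‖ ≤ 2 * R → 𝓕 k ξ = 1 := by
  obtain ⟨k, hk⟩ := exists_fourier_eq_one_on_closedBall (V := V) two_pos
  obtain ⟨C, hC⟩ := exists_enorm_schwartzMap_le k
  have hI : ∫⁻ x, ‖k x‖ₑ ≠ ⊤ := k.integrable.2.ne
  refine ⟨C + (∫⁻ x, ‖k x‖ₑ).toNNReal, fun R hR => ?_⟩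
  set d := Module.finrank ℝ V
  have hRd : 0 < R ^ d := pow_pos hR d
  let dilation : V ≃L[ℝ] V := ContinuousLinearEquiv.smulLeft (Units.mk0 R hR.ne')
  let kR : 𝓢(V, ℂ) := ((R ^ d : ℝ) : ℂ) • compCLMOfContinuousLinearEquiv ℂ dilation k
  have hkR (x : V) : kR x = ((R ^ d : ℝ) : ℂ) * k (R • x) := rfl
  have hnorm (x : V) : ‖kR x‖ₑ = ENNReal.ofReal (R ^ d) * ‖k (R • x)‖ₑ := by
    rw [hkR, enorm_mul, ← ofReal_norm, Complex.norm_real, Real.norm_of_nonneg hRd.le]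
  refine ⟨kR, fun x => ?_, ?_, fun ξ hξ => ?_⟩
  · rw [hnorm, mul_comm, ENNReal.coe_add]
    gcongr
    exact (hC _).trans le_self_add
  · simp only [hnorm]
    rw [lintegral_const_mul' _ _ ENNReal.ofReal_ne_top,
      lintegral_comp_const_smul volume (fun x => ‖k x‖ₑ) hR.ne', ← mul_assoc,
      ← ENNReal.ofReal_mul hRd.le, abs_of_pos (inv_pos.2 hRd), mul_inv_cancel₀ hRd.ne',
      ENNReal.ofReal_one, one_mul, ENNReal.coe_add, ENNReal.coe_toNNReal hI]
    exact le_add_self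
  · have hξ' : ‖R⁻¹ • ξ‖ ≤ 2 := by
      rwa [norm_smul, norm_inv, Real.norm_of_nonneg hR.le, inv_mul_le_iff₀ hR, mul_comm]
    calc 𝓕 kR ξ = ((R ^ d : ℝ) : ℂ) * 𝓕 (fun x => k (R • x)) ξ := by
          rw [fourier_coe, Real.fourier_eq, Real.fourier_eq, ← integral_const_mul]
          simp only [hkR, mul_smul_comm]
      _ = 1 := by
          rw [fourier_comp_const_smul k hR.ne', ← fourier_coe, hk _ hξ',
            abs_of_pos (inv_pos.2 hRd), Complex.real_smul, mul_one, ← Complex.ofReal_mul,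
            mul_inv_cancel₀ hRd.ne', Complex.ofReal_one]

/- The finiteness of `∫ (|F| - s)⁺` for a finite `s` is a quantitative form of `F ∈ L¹ + L^∞`: it is
what makes every integral against a Schwartz function below converge. -/
theorem lintegral_mul_le_mul_lintegral_add {α : Type*} [MeasurableSpace α] {μ : Measure α}
    {u v : α → ℝ≥0∞} {M : ℝ≥0∞} (hv : AEMeasurable v μ) (hM : M ≠ ⊤) (hvM : ∀ x, v x ≤ M) :
    ∫⁻ x, u x * v x ∂μ ≤ s * ∫⁻ x, v x ∂μ + M * ∫⁻ x, (u x - s) ∂μ := by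
  rw [← lintegral_const_mul'' s hv, ← lintegral_const_mul' M _ hM,
    ← lintegral_add_left' (hv.const_mul s)]
  refine lintegral_mono fun x => ?_
  calc u x * v x ≤ (s + (u x - s)) * v x := by
        gcongr
        exact le_add_tsub
    _ = s * v x + v x * (u x - s) := by ring
    _ ≤ s * v x + M * (u x - s) := by
        gcongr
        exact hvM x

theorem lintegral_enorm_mul_comp_sub_le {M : ℝ≥0∞} (hM : M ≠ ⊤) (hkM : ∀ x, ‖k x‖ₑ ≤ M) (t : V) :
    ∫⁻ x, ‖F x * k (x - t)‖ₑ ≤ s * (∫⁻ x, ‖k x‖ₑ) + M * ∫⁻ x, (‖F x‖ₑ - s) := by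
  simp only [enorm_mul]
  rw [← lintegral_sub_right_eq_self (fun x => ‖k x‖ₑ) t]
  exact lintegral_mul_le_mul_lintegral_add (Continuous.aemeasurable (by fun_prop)) hM
    fun x => hkM _

theorem integrable_mul_schwartzMap (hFm : AEStronglyMeasurable F) (hs : s ≠ ⊤)
    (hF : ∫⁻ x, (‖F x‖ₑ - s) ≠ ⊤) (g : 𝓢(V, ℂ)) : Integrable fun x => F x * g x := by
  obtain ⟨C, hC⟩ := exists_enorm_schwartzMap_le g
  refine ⟨hFm.mul g.continuous.aestronglyMeasurable, ?_⟩
  have hle := lintegral_enorm_mul_comp_sub_le (F := F) (s := s) ENNReal.coe_ne_top hC 0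
  simp only [sub_zero] at hle
  refine hle.trans_lt ?_
  have hgint : ∫⁻ x, ‖g x‖ₑ ≠ ⊤ := g.integrable.2.ne
  finiteness

theorem locallyIntegrable_of_lintegral_tsub_ne_top (hFm : AEStronglyMeasurable F) (hs : s ≠ ⊤)
    (hF : ∫⁻ x, (‖F x‖ₑ - s) ≠ ⊤) : LocallyIntegrable F := by
  refine locallyIntegrable_iff.2 fun K hK => ⟨hFm.restrict, ?_⟩
  calc ∫⁻ x in K, ‖F x‖ₑ ≤ ∫⁻ x in K, (s + (‖F x‖ₑ - s)) := lintegral_mono fun x => le_add_tsub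
    _ = s * volume K + ∫⁻ x in K, (‖F x‖ₑ - s) := by
        rw [lintegral_add_left measurable_const, setLIntegral_const]
    _ ≤ s * volume K + ∫⁻ x, (‖F x‖ₑ - s) := by
        gcongr
        exact Measure.restrict_le_self
    _ < ⊤ := ENNReal.add_lt_top.2 ⟨ENNReal.mul_lt_top hs.lt_top hK.measure_lt_top, hF.lt_top⟩

theorem IsBandlimited.integral_mul_eq_integral_mul_convolution (hF : IsBandlimited R F)
    (hR : 0 < R) (hint : ∀ g : 𝓢(V, ℂ), Integrable fun x => F x * g x)
    (hk : ∀ ξ : V, ‖ξ‖ ≤ 2 * R → 𝓕 k ξ = 1) (g : 𝓢(V, ℂ)) :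
    ∫ x, F x * g x = ∫ x, F x * SchwartzMap.convolution (.mul ℂ ℂ) k g x := by
  set G := SchwartzMap.convolution (.mul ℂ ℂ) k g
  have hzero (ξ : V) (hξ : ‖ξ‖ < 2 * R) : 𝓕⁻ (g - G) ξ = 0 := by
    have hneg : 𝓕⁻ (g - G) ξ = 𝓕 (g - G) (-ξ) := rfl
    rw [hneg, ← FourierTransform.fourierCLM_apply (R := ℂ), map_sub,
      FourierTransform.fourierCLM_apply, FourierTransform.fourierCLM_apply,
      SchwartzMap.fourier_convolution]
    simp [hk (-ξ) (by simpa using hξ.le)]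
  have hsupp (ξ : V) (hξ : ξ ∈ tsupport (𝓕⁻ (g - G) : 𝓢(V, ℂ))) : R < ‖ξ‖ := by
    by_contra! hle
    refine notMem_tsupport_iff_eventuallyEq.2 ?_ hξ
    filter_upwards [(isOpen_lt continuous_norm continuous_const).mem_nhds
      (show ‖ξ‖ < 2 * R by linarith)] with y hy using hzero y hy
  have hdiff := hF _ hsupp
  rw [FourierTransform.fourier_fourierInv_eq] at hdiff
  simp only [sub_apply, mul_sub] at hdiff
  rw [integral_sub (hint g) (hint G)] at hdiff
  exact sub_eq_zero.1 hdiff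

theorem aestronglyMeasurable_mul_comp_sub (hFm : AEStronglyMeasurable F) (k : 𝓢(V, ℂ)) :
    AEStronglyMeasurable (fun z : V × V => F z.1 * k (z.1 - z.2)) (volume.prod volume) :=
  hFm.comp_fst.mul (Continuous.aestronglyMeasurable (by fun_prop))

theorem integral_mul_convolution_eq (hFm : AEStronglyMeasurable F) (hs : s ≠ ⊤)
    (hF : ∫⁻ x, (‖F x‖ₑ - s) ≠ ⊤) (k g : 𝓢(V, ℂ)) :
    ∫ x, F x * SchwartzMap.convolution (.mul ℂ ℂ) k g x =
      ∫ t, (∫ x, F x * k (x - t)) * g t := by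
  obtain ⟨M, hM⟩ := exists_enorm_schwartzMap_le k
  set B : ℝ≥0∞ := s * (∫⁻ x, ‖k x‖ₑ) + M * ∫⁻ x, (‖F x‖ₑ - s)
  have hB : B < ⊤ := by
    have hkint : ∫⁻ x, ‖k x‖ₑ ≠ ⊤ := k.integrable.2.ne
    finiteness
  have hmeas : AEStronglyMeasurable (fun z : V × V => F z.1 * k (z.1 - z.2) * g z.2)
      (volume.prod volume) :=
    (aestronglyMeasurable_mul_comp_sub hFm k).mul
      (g.continuous.comp continuous_snd).aestronglyMeasurable
  have hint : Integrable (Function.uncurry fun x t => F x * k (x - t) * g t)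
      (volume.prod volume) := by
    refine ⟨hmeas, ?_⟩
    calc ∫⁻ z : V × V, ‖F z.1 * k (z.1 - z.2) * g z.2‖ₑ ∂volume.prod volume
        = ∫⁻ t, (∫⁻ x, ‖F x * k (x - t)‖ₑ) * ‖g t‖ₑ := by
          rw [lintegral_prod_symm _ hmeas.enorm]
          simp only [enorm_mul _ (g _), lintegral_mul_const' _ _ enorm_ne_top]
      _ ≤ ∫⁻ t, B * ‖g t‖ₑ := by
          gcongr with t
          exact lintegral_enorm_mul_comp_sub_le ENNReal.coe_ne_top hM t
      _ = B * ∫⁻ t, ‖g t‖ₑ := lintegral_const_mul' _ _ hB.ne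
      _ < ⊤ := ENNReal.mul_lt_top hB g.integrable.2
  calc ∫ x, F x * SchwartzMap.convolution (.mul ℂ ℂ) k g x
      = ∫ x, ∫ t, F x * k (x - t) * g t := by
        simp only [SchwartzMap.convolution_apply, convolution_eq_swap,
          ContinuousLinearMap.mul_apply', mul_assoc, integral_const_mul]
    _ = ∫ t, ∫ x, F x * k (x - t) * g t := integral_integral_swap hint
    _ = _ := by simp only [integral_mul_const]

theorem IsBandlimited.ae_eq_integral_mul_comp_sub (hF : IsBandlimited R F) (hR : 0 < R)
    (hFm : AEStronglyMeasurable F) (hs : s ≠ ⊤) (hFs : ∫⁻ x, (‖F x‖ₑ - s) ≠ ⊤)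
    (hk : ∀ ξ : V, ‖ξ‖ ≤ 2 * R → 𝓕 k ξ = 1) :
    ∀ᵐ t, F t = ∫ x, F x * k (x - t) := by
  obtain ⟨M, hM⟩ := exists_enorm_schwartzMap_le k
  set B : ℝ≥0∞ := s * (∫⁻ x, ‖k x‖ₑ) + M * ∫⁻ x, (‖F x‖ₑ - s)
  have hB : B < ⊤ := by
    have hkint : ∫⁻ x, ‖k x‖ₑ ≠ ⊤ := k.integrable.2.ne
    finiteness
  have hbound (t : V) : ‖∫ x, F x * k (x - t)‖ₑ ≤ B :=
    (enorm_integral_le_lintegral_enorm _).trans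
      (lintegral_enorm_mul_comp_sub_le ENNReal.coe_ne_top hM t)
  have hmeas : AEStronglyMeasurable fun t => ∫ x, F x * k (x - t) :=
    (aestronglyMeasurable_mul_comp_sub hFm k).prod_swap.integral_prod_right'
  have hloc : LocallyIntegrable fun t => ∫ x, F x * k (x - t) :=
    locallyIntegrable_of_lintegral_tsub_ne_top hmeas hB.ne
      (by simp [tsub_eq_zero_of_le (hbound _)])
  refine ae_eq_of_integral_contDiff_smul_eq
    (locallyIntegrable_of_lintegral_tsub_ne_top hFm hs hFs) hloc fun g hg hgc => ?_
  have hsupp : HasCompactSupport fun x => (g x : ℂ) := hgc.comp_left Complex.ofReal_zero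
  let φ : 𝓢(V, ℂ) := hsupp.toSchwartzMap (Complex.ofRealCLM.contDiff.comp hg)
  have hφ (z : ℂ) (x : V) : z * φ x = g x • z := by
    rw [Complex.real_smul, mul_comm]
    rfl
  calc ∫ x, g x • F x = ∫ x, F x * φ x := by simp only [hφ]
    _ = ∫ x, F x * SchwartzMap.convolution (.mul ℂ ℂ) k φ x :=
        hF.integral_mul_eq_integral_mul_convolution hR
          (integrable_mul_schwartzMap hFm hs hFs) hk φ
    _ = ∫ t, (∫ x, F x * k (x - t)) * φ t := integral_mul_convolution_eq hFm hs hFs k φ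
    _ = ∫ t, g t • ∫ x, F x * k (x - t) := by simp only [hφ]

variable (V) in
theorem exists_ae_enorm_le_of_isBandlimited : ∃ A : ℝ≥0, ∀ (R : ℝ) (F : V → ℂ) (s : ℝ≥0∞), 0 < R →
    IsBandlimited R F → AEStronglyMeasurable F → s ≠ ⊤ → ∫⁻ x, (‖F x‖ₑ - s) ≠ ⊤ →
    ∀ᵐ x, ‖F x‖ₑ ≤
      A * (s + ENNReal.ofReal (R ^ Module.finrank ℝ V) * ∫⁻ x, (‖F x‖ₑ - s)) := by
  obtain ⟨A, hA⟩ := exists_kernel_fourier_eq_one V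
  refine ⟨A, fun R F s hR hF hFm hs hFs => ?_⟩
  obtain ⟨k, hksup, hkint, hk⟩ := hA R hR
  filter_upwards [hF.ae_eq_integral_mul_comp_sub hR hFm hs hFs hk] with t ht
  calc ‖F t‖ₑ = ‖∫ x, F x * k (x - t)‖ₑ := by rw [← ht]
    _ ≤ ∫⁻ x, ‖F x * k (x - t)‖ₑ := enorm_integral_le_lintegral_enorm _
    _ ≤ s * (∫⁻ x, ‖k x‖ₑ) +
          A * ENNReal.ofReal (R ^ Module.finrank ℝ V) * ∫⁻ x, (‖F x‖ₑ - s) :=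
        lintegral_enorm_mul_comp_sub_le (by finiteness) hksup t
    _ ≤ s * A + A * ENNReal.ofReal (R ^ Module.finrank ℝ V) * ∫⁻ x, (‖F x‖ₑ - s) := by gcongr
    _ = _ := by ring

variable (V) in
theorem exists_ae_enorm_div_le_of_isBandlimited : ∃ K : ℝ, 1 ≤ K ∧
    ∀ (R : ℝ) (F : V → ℂ) (p : V → ℝ) (μ : ℝ≥0∞), 1 ≤ R → IsBandlimited R F →
      AEStronglyMeasurable F → (∀ x, 1 ≤ p x) → μ ≠ 0 → μ ≠ ⊤ →
      ∫⁻ x, (‖F x‖ₑ / μ) ^ p x ≤ 1 →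
      ∀ᵐ x, ‖F x‖ₑ / μ ≤ ENNReal.ofReal (K * R ^ Module.finrank ℝ V) := by
  obtain ⟨A, hA⟩ := exists_ae_enorm_le_of_isBandlimited V
  refine ⟨2 * A + 1, le_add_of_nonneg_left (by positivity), ?_⟩
  intro R F p μ hR hF hFm hp hμ0 hμ hmod
  have htail := lintegral_tsub_le_of_lintegral_rpow_le_one hp hμ0 hμ hmod
  filter_upwards [hA R F μ (one_pos.trans_le hR) hF hFm hμ (htail.trans_lt hμ.lt_top).ne] with x hx
  set D := ENNReal.ofReal (R ^ Module.finrank ℝ V)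
  have hD : 1 ≤ D := ENNReal.one_le_ofReal.2 (one_le_pow₀ hR)
  rw [ENNReal.div_le_iff hμ0 hμ]
  calc ‖F x‖ₑ ≤ A * (μ + D * ∫⁻ x, (‖F x‖ₑ - μ)) := hx
    _ ≤ A * (D * μ + D * μ) := by
        gcongr
        exact le_mul_of_one_le_left' hD
    _ = 2 * A * D * μ := by ring
    _ ≤ (2 * A + 1) * D * μ := by
        gcongr
        exact le_self_add
    _ = ENNReal.ofReal ((2 * A + 1) * R ^ Module.finrank ℝ V) * μ := by
        rw [ENNReal.ofReal_mul (by positivity), ENNReal.ofReal_add (by positivity) one_pos.le,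
          ENNReal.ofReal_mul zero_le_two, ENNReal.ofReal_coe_nnreal, ENNReal.ofReal_ofNat,
          ENNReal.ofReal_one]

end Bandlimited

theorem lintegral_inv_ofReal_one_add_norm_rpow_ne_top {E : Type*} [NormedAddCommGroup E]
    [NormedSpace ℝ E] [FiniteDimensional ℝ E] [MeasurableSpace E] [BorelSpace E] (μ : Measure E)
    [μ.IsAddHaarMeasure] {m : ℝ} (hm : Module.finrank ℝ E < m) :
    ∫⁻ x, (ENNReal.ofReal ((1 + ‖x‖) ^ m))⁻¹ ∂μ ≠ ⊤ := by
  have heq (x : E) : (ENNReal.ofReal ((1 + ‖x‖) ^ m))⁻¹ = ENNReal.ofReal ((1 + ‖x‖) ^ (-m)) := by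
    rw [Real.rpow_neg (by positivity), ENNReal.ofReal_inv_of_pos (by positivity)]
  simp only [heq]
  exact (finite_integral_one_add_norm hm).ne

section Translation

variable {n : ℕ} {p : EuclideanSpace ℝ (Fin n) → ℝ} {a c P l κ : ℝ}

theorem exists_luxNorm_comp_add_right_le_rpow (hp1 : ∀ x, 1 ≤ p x) (hpP : ∀ x, p x ≤ P)
    (hlog : IsLocallyLogHolder a fun x => 1 / p x)
    (hdecay : HasLogHolderDecay c (fun x => 1 / p x) l) :
    ∃ C N : ℝ, 0 < C ∧ 0 ≤ N ∧ ∀ R : ℝ, 1 ≤ R → ∀ f : EuclideanSpace ℝ (Fin n) → ℂ,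
      AEStronglyMeasurable f → IsBandlimited R f → ∀ h : EuclideanSpace ℝ (Fin n),
      luxNorm p (fun x => f (x + h)) ≤
        ENNReal.ofReal (C * (1 + R * ‖h‖) ^ N) * luxNorm p f := by
  obtain ⟨K, hK1, hK⟩ := exists_ae_enorm_div_le_of_isBandlimited (EuclideanSpace ℝ (Fin n))
  rw [finrank_euclideanSpace_fin] at hK
  have hm : (0 : ℝ) ≤ n + 1 := by positivity
  obtain ⟨C, N, hN, hC⟩ := exists_mul_rpow_abs_sub_le_of_one_div hp1 hpP hlog hdecay hK1 n hm
  have hC1 : 1 ≤ C := by simpa using hC 1 le_rfl 0 0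
  let w (x : EuclideanSpace ℝ (Fin n)) : ℝ≥0∞ := (ENNReal.ofReal ((1 + ‖x‖) ^ (n + 1 : ℝ)))⁻¹
  have hw : Measurable w := by fun_prop
  have hw1 (x) : w x ≤ 1 := ENNReal.inv_le_one.2 (ENNReal.one_le_ofReal.2
    (Real.one_le_rpow (le_add_of_nonneg_right (norm_nonneg x)) hm))
  have hwint : ∫⁻ x, w x ≠ ⊤ :=
    lintegral_inv_ofReal_one_add_norm_rpow_ne_top volume (by simp)
  refine ⟨C * (1 + (∫⁻ x, w x).toReal), N, by positivity, hN, fun R hR f hfm hf h => ?_⟩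
  have hA1 : 1 ≤ C * (1 + R * ‖h‖) ^ N := one_le_mul_of_one_le_of_one_le hC1
    (Real.one_le_rpow (le_add_of_nonneg_right (by positivity)) hN)
  have hB : ENNReal.ofReal (C * (1 + (∫⁻ x, w x).toReal) * (1 + R * ‖h‖) ^ N) =
      ENNReal.ofReal (C * (1 + R * ‖h‖) ^ N) * (1 + ∫⁻ x, w x) := by
    rw [mul_right_comm, ENNReal.ofReal_mul (by positivity), ENNReal.ofReal_add one_pos.le
      ENNReal.toReal_nonneg, ENNReal.ofReal_one, ENNReal.ofReal_toReal hwint]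
  have hpA (x) : (ENNReal.ofReal (K * R ^ n) * (w (x + h))⁻¹) ^ |p x - p (x + h)| ≤
      ENNReal.ofReal (C * (1 + R * ‖h‖) ^ N) := by
    rw [inv_inv, ← ENNReal.ofReal_mul (by positivity),
      ENNReal.ofReal_rpow_of_nonneg (by positivity) (abs_nonneg _)]
    exact ENNReal.ofReal_le_ofReal (by simpa using hC R hR x (x + h))
  rw [hB]
  exact luxNorm_comp_add_right_le hp1 (hK R f p · hR hf hfm hp1)
    (ENNReal.one_le_ofReal.2 (one_le_mul_of_one_le_of_one_le hK1 (one_le_pow₀ hR)))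
    ENNReal.ofReal_ne_top hw hw1 hwint h (ENNReal.one_le_ofReal.2 hA1) ENNReal.ofReal_ne_top hpA

theorem translation_bounded_bandlimited_general (hp1 : ∀ x, 1 ≤ p x) (hpP : ∀ x, p x ≤ P)
    (hlog : IsLocallyLogHolder a p) (hdecay : HasLogHolderDecay c (fun x => 1 / p x) l)
    (hκ : 0 < κ) :
    ∃ C > 0, ∀ R : ℝ, 1 ≤ R → ∀ f : EuclideanSpace ℝ (Fin n) → ℂ,
      AEStronglyMeasurable f → IsBandlimited R f → ∀ h : EuclideanSpace ℝ (Fin n),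
      luxNorm p (fun x => f (x + h)) ≤
        ENNReal.ofReal (C * Real.exp (κ * (R * ‖h‖) * a)) * luxNorm p f := by
  rcases hlog.const_nonneg.eq_or_lt with rfl | ha
  · have hconst (x) : p x = p 0 :=
      sub_eq_zero.1 (abs_nonpos_iff.1 (by simpa using hlog x 0))
    refine ⟨1, one_pos, fun R _ f _ _ h => ?_⟩
    simp [luxNorm_comp_add_right_of_const hconst h]
  obtain ⟨C, N, hC, hN, htrans⟩ :=
    exists_luxNorm_comp_add_right_le_rpow hp1 hpP (hlog.one_div hp1) hdecay
  obtain ⟨D, hD, hexp⟩ := exists_one_add_rpow_le_mul_exp (mul_pos hκ ha) hN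
  refine ⟨C * D, mul_pos hC hD, fun R hR f hfm hf h => (htrans R hR f hfm hf h).trans ?_⟩
  refine mul_le_mul_left (ENNReal.ofReal_le_ofReal ?_) _
  calc C * (1 + R * ‖h‖) ^ N ≤ C * (D * Real.exp (κ * a * (R * ‖h‖))) := by
        gcongr
        exact hexp _ (by positivity)
    _ = C * D * Real.exp (κ * (R * ‖h‖) * a) := by ring_nf

theorem half_mul_two_pow_succ_mul_norm_le (v : ℕ) (h : EuclideanSpace ℝ (Fin n)) :
    (1 / 2 : ℝ) * (2 ^ (v + 1) * ‖h‖) ≤ 2 ^ (v * n) * ‖h‖ := by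
  have hhalf : (1 / 2 : ℝ) * (2 ^ (v + 1) * ‖h‖) = 2 ^ v * ‖h‖ := by ring
  rw [hhalf]
  rcases n.eq_zero_or_pos with rfl | hn
  · simp [Subsingleton.elim h 0]
  · gcongr
    · exact one_le_two
    · exact Nat.le_mul_of_pos_right v hn

end Translation

/-- Boundedness of the translation operator `τ_h f = f(· + h)` on `L^{p(·)}` for band-limited
functions: if `p ∈ P^log`, `1 < p⁻ ≤ p⁺ < ∞`, and `supp 𝓕f ⊆ {|ξ| ≤ 2^{v+1}}`, then
`‖τ_h f‖_{p(·)} ≤ c exp((2 + 2^{vn}|h|) c_log(p)) ‖f‖_{p(·)}` with `c` independent of `h, v`. -/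
theorem translation_bounded_bandlimited (n : ℕ) (p : EuclideanSpace ℝ (Fin n) → ℝ)
    (cLog cLogP pm pp pInf : ℝ) (hpmeas : Measurable p)
    (hpm : 1 < pm) (hbounds : ∀ x, pm ≤ p x ∧ p x ≤ pp)
    (hlog : ∀ x y, |1 / p x - 1 / p y| ≤ cLog / Real.log (Real.exp 1 + 1 / ‖x - y‖))
    (hdecay : ∀ x, |1 / p x - 1 / pInf| ≤ cLog / Real.log (Real.exp 1 + ‖x‖))
    (hlogp : ∀ x y, |p x - p y| ≤ cLogP / Real.log (Real.exp 1 + 1 / ‖x - y‖)) :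
    ∃ c > 0, ∀ (v : ℕ) (f : EuclideanSpace ℝ (Fin n) → ℂ) (h : EuclideanSpace ℝ (Fin n)),
      Measurable f → luxNorm p f < ⊤ →
      (∀ φ : 𝓢(EuclideanSpace ℝ (Fin n), ℂ),
        (∀ ξ ∈ tsupport ⇑φ, (2 : ℝ) ^ (v + 1) < ‖ξ‖) →
        ∫ x, f x * fourierTransformCLM ℂ φ x = 0) →
      luxNorm p (fun x => f (x + h)) ≤
        ENNReal.ofReal (c * Real.exp ((2 + 2 ^ (v * n) * ‖h‖) * cLogP)) * luxNorm p f := by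
  obtain ⟨c, hc, hbound⟩ := translation_bounded_bandlimited_general
    (fun x => hpm.le.trans (hbounds x).1) (fun x => (hbounds x).2) hlogp hdecay one_half_pos
  refine ⟨c, hc, fun v f h hf _ hband => ?_⟩
  refine (hbound _ (one_le_pow₀ one_le_two) f hf.aestronglyMeasurable hband h).trans ?_
  gcongr
  · exact IsLocallyLogHolder.const_nonneg hlogp
  · exact (half_mul_two_pow_succ_mul_norm_le v h).trans (le_add_of_nonneg_left zero_le_two)
end

section
/- (r-trick) Let r > 0, v ∈ ℕ₀, and m > n. There exists c = c(r, m, n) > 0 such that for all g ∈ S'(ℝ^n) with supp 𝓕g ⊂ {ξ ∈ ℝ^n : |ξ| ≤ 2^{v+1}}, one has |g(x)| ≤ c (η_{v,m} * |g|^r (x))^{1/r} for all x ∈ ℝ^n. -/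
open MeasureTheory ENNReal SchwartzMap

/-! Rescaling reduces to a fixed bounded spectrum. If the Schwartz function `χ` is `1` near that
spectrum, then `g x = ∫ 𝓕 χ (y - x) • g y`, so `‖g‖` is at most a constant times its average
against `(1 + |x - y|)^(-a)`, for every `a`. For `1 ≤ r` Hölder's inequality gives the claim. For
`r ≤ 1` split `‖g‖ = ‖g‖^(1 - r) ‖g‖^r` under the integral and pull out the Peetre maximal
function `M` of `g`: this gives `M ≤ C M^(1 - r) (η * ‖g‖^r)`, and `M^(1 - r)` can be cancelled once
`M` is known to be finite. Polynomial growth of `g` ensures this for a large exponent `a`, and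
hence, wherever `η * ‖g‖^r` is finite, for the required one. -/

open scoped NNReal

section PeetreMaximal

variable {X : Type*} [PseudoEMetricSpace X]

/-- The Peetre maximal function `f*_a(x) = sup_y f(y) / (1 + d(x, y))^a` of a nonnegative function
on a metric space. -/
noncomputable def peetreMaximal (a : ℝ) (f : X → ℝ≥0∞) (x : X) : ℝ≥0∞ :=
  ⨆ y, (1 + edist x y) ^ (-a) * f y

/-- The integral `∫ f(y) / (1 + d(x, y))^a dμ(y)`, which is `(η_{0,a} * f)(x)` if `μ` is the
Lebesgue measure on `ℝⁿ`. -/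
noncomputable def etaConv [MeasurableSpace X] (μ : Measure X) (a : ℝ) (f : X → ℝ≥0∞) (x : X) :
    ℝ≥0∞ :=
  ∫⁻ y, (1 + edist x y) ^ (-a) * f y ∂μ

variable {a b r : ℝ} {f : X → ℝ≥0∞}

theorem one_le_one_add_edist_rpow (ha : 0 ≤ a) (x y : X) : 1 ≤ (1 + edist x y) ^ a := by
  simpa using ENNReal.rpow_le_rpow (le_self_add : 1 ≤ 1 + edist x y) ha

theorem one_add_edist_rpow_neg_le_one (ha : 0 ≤ a) (x y : X) : (1 + edist x y) ^ (-a) ≤ 1 := by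
  rw [ENNReal.rpow_neg, ENNReal.inv_le_one]
  exact one_le_one_add_edist_rpow ha x y

theorem one_add_edist_rpow_neg_mul_le (ha : 0 ≤ a) (x y z : X) :
    (1 + edist x y) ^ (-a) * (1 + edist y z) ^ (-a) ≤ (1 + edist x z) ^ (-a) := by
  have weight_ne_zero (u v : X) : (1 + edist u v) ^ a ≠ 0 :=
    (one_pos.trans_le (one_le_one_add_edist_rpow ha u v)).ne'
  simp only [ENNReal.rpow_neg]
  rw [← ENNReal.mul_inv (.inl (weight_ne_zero x y)) (.inr (weight_ne_zero y z)),
    ← mul_rpow_of_nonneg _ _ ha]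
  gcongr
  calc 1 + edist x z ≤ 1 + (edist x y + edist y z) := by gcongr; exact edist_triangle x y z
    _ ≤ 1 + (edist x y + edist y z) + edist x y * edist y z := le_self_add
    _ = (1 + edist x y) * (1 + edist y z) := by ring

theorem le_peetreMaximal (a : ℝ) (f : X → ℝ≥0∞) (x : X) : f x ≤ peetreMaximal a f x := by
  simpa [peetreMaximal] using le_iSup (fun y => (1 + edist x y) ^ (-a) * f y) x

theorem peetreMaximal_anti (hab : a ≤ b) (f : X → ℝ≥0∞) (x : X) :
    peetreMaximal b f x ≤ peetreMaximal a f x := by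
  unfold peetreMaximal
  gcongr
  exact le_self_add

theorem peetreMaximal_rpow (hr : 0 < r) (a : ℝ) (f : X → ℝ≥0∞) (x : X) :
    peetreMaximal a f x ^ r = peetreMaximal (a * r) (fun y => f y ^ r) x := by
  simpa only [peetreMaximal, orderIsoRpow_apply, mul_rpow_of_nonneg _ _ hr.le, ← ENNReal.rpow_mul,
    neg_mul] using (orderIsoRpow r hr).map_iSup fun y => (1 + edist x y) ^ (-a) * f y

variable [MeasurableSpace X] {μ : Measure X}

theorem etaConv_anti (hab : a ≤ b) (μ : Measure X) (f : X → ℝ≥0∞) (x : X) :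
    etaConv μ b f x ≤ etaConv μ a f x := by
  unfold etaConv
  gcongr
  exact le_self_add

theorem peetreMaximal_le_of_le_etaConv {F : X → ℝ≥0∞} {K : ℝ≥0} (ha : 0 ≤ a)
    (h : ∀ y, f y ≤ K * etaConv μ a F y) (x : X) :
    peetreMaximal a f x ≤ K * etaConv μ a F x := by
  refine iSup_le fun y => ?_
  have weight_ne_top : (1 + edist x y) ^ (-a) ≠ ∞ :=
    ne_top_of_le_ne_top one_ne_top (one_add_edist_rpow_neg_le_one ha x y)
  calc (1 + edist x y) ^ (-a) * f y ≤ (1 + edist x y) ^ (-a) * (K * etaConv μ a F y) := by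
        gcongr; exact h y
    _ = K * ∫⁻ z, (1 + edist x y) ^ (-a) * (1 + edist y z) ^ (-a) * F z ∂μ := by
        simp only [mul_assoc]
        rw [lintegral_const_mul' _ _ weight_ne_top, mul_left_comm, etaConv]
    _ ≤ K * etaConv μ a F x := by
        unfold etaConv
        gcongr with z
        exact one_add_edist_rpow_neg_mul_le ha x y z

theorem etaConv_le_peetreMaximal_rpow_mul (hr0 : 0 ≤ r) (hr1 : r ≤ 1) (x : X)
    (hfin : peetreMaximal a f x ≠ ∞) :
    etaConv μ a f x ≤
      peetreMaximal a f x ^ (1 - r) * etaConv μ (a * r) (fun y => f y ^ r) x := by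
  have hr1' : 0 ≤ 1 - r := sub_nonneg.2 hr1
  rw [etaConv, etaConv, ← lintegral_const_mul' _ _ (rpow_ne_top_of_nonneg hr1' hfin)]
  refine lintegral_mono fun y => ?_
  set w := (1 + edist x y) ^ (-a) * f y with hw
  calc w = w ^ (1 - r) * w ^ r := by
        rw [← rpow_add_of_nonneg _ _ hr1' hr0, sub_add_cancel, ENNReal.rpow_one]
    _ ≤ peetreMaximal a f x ^ (1 - r) * w ^ r := by
        gcongr
        exact le_iSup (fun y => (1 + edist x y) ^ (-a) * f y) y
    _ = peetreMaximal a f x ^ (1 - r) * ((1 + edist x y) ^ (-(a * r)) * f y ^ r) := by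
        rw [hw, mul_rpow_of_nonneg _ _ hr0, ← ENNReal.rpow_mul, neg_mul]

theorem peetreMaximal_rpow_le_of_ne_top {K : ℝ≥0} (ha : 0 ≤ a)
    (hf : ∀ y, f y ≤ K * etaConv μ a f y) (hr0 : 0 < r) (hr1 : r ≤ 1) (x : X)
    (hfin : peetreMaximal a f x ≠ ∞) :
    peetreMaximal a f x ^ r ≤ K * etaConv μ (a * r) (fun y => f y ^ r) x := by
  set M := peetreMaximal a f x
  rcases eq_or_ne M 0 with hM | hM
  · simp [hM, hr0]
  have hpow_top : M ^ (1 - r) ≠ ∞ := rpow_ne_top_of_nonneg (sub_nonneg.2 hr1) hfin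
  have hpow_zero : M ^ (1 - r) ≠ 0 := by simp [rpow_eq_zero_iff, hM, hfin]
  refine (ENNReal.mul_le_mul_iff_right hpow_zero hpow_top).1 ?_
  calc M ^ (1 - r) * M ^ r = M := by
        rw [← ENNReal.rpow_add _ _ hM hfin, sub_add_cancel, ENNReal.rpow_one]
    _ ≤ K * etaConv μ a f x := peetreMaximal_le_of_le_etaConv ha hf x
    _ ≤ K * (M ^ (1 - r) * etaConv μ (a * r) (fun y => f y ^ r) x) := by
        gcongr; exact etaConv_le_peetreMaximal_rpow_mul hr0.le hr1 x hfin
    _ = M ^ (1 - r) * (K * etaConv μ (a * r) (fun y => f y ^ r) x) := mul_left_comm _ _ _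

variable {m : ℝ} {K : ℝ → ℝ≥0}

-- A large exponent, which depends on `f`, makes the maximal function finite; the resulting bound
-- has a constant depending on `f` but suffices for finiteness at the exponent `m / r`.
theorem peetreMaximal_ne_top_of_le_etaConv
    (hf : ∀ a, 0 ≤ a → ∀ x, f x ≤ K a * etaConv μ a f x)
    (hgrowth : ∃ b, ∀ x, peetreMaximal b f x ≠ ∞) (hr0 : 0 < r) (hr1 : r ≤ 1) (hm : 0 ≤ m) {x : X}
    (hfin : etaConv μ m (fun y => f y ^ r) x ≠ ∞) :
    peetreMaximal (m / r) f x ≠ ∞ := by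
  obtain ⟨b, hb⟩ := hgrowth
  set A := max b (m / r)
  have hA : 0 ≤ A := (div_nonneg hm hr0.le).trans (le_max_right _ _)
  have hmA : m ≤ A * r := (div_le_iff₀ hr0).1 (le_max_right _ _)
  have hpow y : f y ^ r ≤ K A * etaConv μ m (fun y => f y ^ r) y :=
    calc f y ^ r ≤ peetreMaximal A f y ^ r := by gcongr; exact le_peetreMaximal A f y
      _ ≤ K A * etaConv μ (A * r) (fun y => f y ^ r) y :=
        peetreMaximal_rpow_le_of_ne_top hA (hf A hA) hr0 hr1 y
          (ne_top_of_le_ne_top (hb y) (peetreMaximal_anti (le_max_left _ _) f y))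
      _ ≤ K A * etaConv μ m (fun y => f y ^ r) y := by gcongr; exact etaConv_anti hmA _ _ _
  refine (rpow_lt_top_iff_of_pos hr0).1 ?_ |>.ne
  rw [peetreMaximal_rpow hr0, div_mul_cancel₀ _ hr0.ne']
  exact (peetreMaximal_le_of_le_etaConv hm hpow x).trans_lt (mul_lt_top coe_lt_top hfin.lt_top)

theorem rpow_le_etaConv_of_le_one
    (hf : ∀ a, 0 ≤ a → ∀ x, f x ≤ K a * etaConv μ a f x)
    (hgrowth : ∃ b, ∀ x, peetreMaximal b f x ≠ ∞) (hr0 : 0 < r) (hr1 : r ≤ 1) (hm : 0 ≤ m) {x : X}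
    (hfin : etaConv μ m (fun y => f y ^ r) x ≠ ∞) :
    f x ^ r ≤ K (m / r) * etaConv μ m (fun y => f y ^ r) x := by
  have hmr : 0 ≤ m / r := div_nonneg hm hr0.le
  calc f x ^ r ≤ peetreMaximal (m / r) f x ^ r := by gcongr; exact le_peetreMaximal _ f x
    _ ≤ K (m / r) * etaConv μ (m / r * r) (fun y => f y ^ r) x :=
      peetreMaximal_rpow_le_of_ne_top hmr (hf _ hmr) hr0 hr1 x
        (peetreMaximal_ne_top_of_le_etaConv hf hgrowth hr0 hr1 hm hfin)
    _ = K (m / r) * etaConv μ m (fun y => f y ^ r) x := by rw [div_mul_cancel₀ _ hr0.ne']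

theorem etaConv_le_of_one_le [OpensMeasurableSpace X] (hr : 1 ≤ r) (hfm : Measurable f) (m : ℝ)
    (x : X) :
    etaConv μ m f x ≤
      etaConv μ m 1 x ^ (1 - 1 / r) * etaConv μ m (fun y => f y ^ r) x ^ (1 / r) := by
  have hr0 : 0 < r := one_pos.trans_le hr
  have hw : Measurable fun y => (1 + edist x y) ^ (-m) := by fun_prop
  have hinv : 0 ≤ 1 - 1 / r := sub_nonneg.2 ((div_le_one hr0).2 hr)
  have hinv' : 0 ≤ 1 / r := by positivity
  calc etaConv μ m f x = ∫⁻ y, ((1 + edist x y) ^ (-m)) ^ (1 - 1 / r) *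
        ((1 + edist x y) ^ (-m) * f y ^ r) ^ (1 / r) ∂μ := by
        refine lintegral_congr fun y => ?_
        rw [mul_rpow_of_nonneg _ _ hinv', ← mul_assoc, ← rpow_add_of_nonneg _ _ hinv hinv',
          ← ENNReal.rpow_mul (f y), mul_one_div_cancel hr0.ne', sub_add_cancel, ENNReal.rpow_one,
          ENNReal.rpow_one]
    _ ≤ _ := by
        simpa only [etaConv, Pi.one_apply, mul_one] using
          lintegral_mul_norm_pow_le hw.aemeasurable (by fun_prop) hinv hinv' (sub_add_cancel 1 _)

theorem exists_le_mul_etaConv_rpow [OpensMeasurableSpace X] (μ : Measure X) (K : ℝ → ℝ≥0)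
    (hr : 0 < r) (hm : 0 ≤ m) {J : ℝ≥0∞} (hJ : J ≠ ∞) (hμ : ∀ x, etaConv μ m 1 x ≤ J) :
    ∃ c : ℝ≥0∞, 0 < c ∧ c < ∞ ∧ ∀ f : X → ℝ≥0∞, Measurable f →
      (∀ a, 0 ≤ a → ∀ x, f x ≤ K a * etaConv μ a f x) →
      (∃ b, ∀ x, peetreMaximal b f x ≠ ∞) →
      ∀ x, f x ≤ c * etaConv μ m (fun y => f y ^ r) x ^ (1 / r) := by
  rcases le_total r 1 with hr1 | hr1
  · refine ⟨(K (m / r) + 1 : ℝ≥0∞) ^ (1 / r), rpow_pos (by positivity) (by finiteness),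
      by finiteness, fun f _ hf hgrowth x => ?_⟩
    rw [← mul_rpow_of_nonneg _ _ (by positivity), one_div, le_rpow_inv_iff hr]
    rcases eq_or_ne (etaConv μ m (fun y => f y ^ r) x) ∞ with htop | hfin
    · simp [htop]
    · calc f x ^ r ≤ K (m / r) * etaConv μ m (fun y => f y ^ r) x :=
            rpow_le_etaConv_of_le_one hf hgrowth hr hr1 hm hfin
        _ ≤ _ := by gcongr; exact le_self_add
  · have hinv : 0 ≤ 1 - 1 / r := sub_nonneg.2 ((div_le_one hr).2 hr1)
    refine ⟨K m * J ^ (1 - 1 / r) + 1, by positivity, by finiteness, fun f hfm hf _ x => ?_⟩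
    calc f x ≤ K m * etaConv μ m f x := hf m hm x
      _ ≤ K m * (J ^ (1 - 1 / r) * etaConv μ m (fun y => f y ^ r) x ^ (1 / r)) := by
        gcongr
        refine (etaConv_le_of_one_le hr1 hfm m x).trans ?_
        gcongr
        exact hμ x
      _ = K m * J ^ (1 - 1 / r) * etaConv μ m (fun y => f y ^ r) x ^ (1 / r) :=
        (mul_assoc _ _ _).symm
      _ ≤ _ := by gcongr; exact le_self_add

end PeetreMaximal

section NormWeight

variable {V : Type*} [NormedAddCommGroup V]

theorem one_add_enorm_rpow (x : V) (a : ℝ) :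
    (1 + ‖x‖ₑ) ^ a = ENNReal.ofReal ((1 + ‖x‖) ^ a) := by
  rw [← ofReal_norm, ← ofReal_one, ← ENNReal.ofReal_add zero_le_one (norm_nonneg _),
    ofReal_rpow_of_pos (by positivity)]

theorem etaConv_one_eq [MeasurableSpace V] [BorelSpace V] (μ : Measure V) [μ.IsAddLeftInvariant]
    [μ.IsNegInvariant] (m : ℝ) (x : V) :
    etaConv μ m 1 x = ∫⁻ y, ENNReal.ofReal ((1 + ‖y‖) ^ (-m)) ∂μ := by
  rw [← lintegral_sub_left_eq_self _ x]
  simp only [etaConv, Pi.one_apply, mul_one, edist_eq_enorm_sub, one_add_enorm_rpow]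

end NormWeight

section PolynomialGrowth

variable {V E : Type*} [NormedAddCommGroup V] [NormedAddCommGroup E]

/-- The function `g` grows at most polynomially, so that integration against `g` defines a tempered
distribution if `g` is continuous. -/
def HasPolynomialGrowth (g : V → E) : Prop :=
  ∃ (C : ℝ) (k : ℕ), ∀ x, ‖g x‖ ≤ C * (1 + ‖x‖) ^ k

theorem HasPolynomialGrowth.exists_norm_le_mul {g : V → E} (hg : HasPolynomialGrowth g) :
    ∃ (C : ℝ) (k : ℕ), 0 ≤ C ∧ ∀ x y, ‖g y‖ ≤ C * (1 + ‖x‖) ^ k * (1 + ‖y - x‖) ^ k := by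
  obtain ⟨C, k, hgC⟩ := hg
  have hC : 0 ≤ C := by simpa using (norm_nonneg _).trans (hgC 0)
  refine ⟨C, k, hC, fun x y => ?_⟩
  have hmul : 1 + ‖y‖ ≤ (1 + ‖x‖) * (1 + ‖y - x‖) := by
    nlinarith [norm_le_norm_add_norm_sub' y x, norm_nonneg x, norm_nonneg (y - x)]
  calc ‖g y‖ ≤ C * (1 + ‖y‖) ^ k := hgC y
    _ ≤ C * ((1 + ‖x‖) * (1 + ‖y - x‖)) ^ k := by gcongr
    _ = C * (1 + ‖x‖) ^ k * (1 + ‖y - x‖) ^ k := by rw [mul_pow, mul_assoc]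

theorem HasPolynomialGrowth.comp_smul [NormedSpace ℝ V] {g : V → E} (hg : HasPolynomialGrowth g)
    (t : ℝ) : HasPolynomialGrowth fun x => g (t • x) := by
  obtain ⟨C, k, hgC⟩ := hg
  have : 0 ≤ C := by simpa using (norm_nonneg _).trans (hgC 0)
  refine ⟨C * (1 + |t|) ^ k, k, fun x => (hgC _).trans ?_⟩
  rw [mul_assoc, ← mul_pow, norm_smul, Real.norm_eq_abs]
  gcongr
  nlinarith [abs_nonneg t, norm_nonneg x]

theorem HasPolynomialGrowth.exists_peetreMaximal_ne_top {g : V → E} (hg : HasPolynomialGrowth g) :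
    ∃ b, ∀ x, peetreMaximal b (fun y => ‖g y‖ₑ) x ≠ ∞ := by
  obtain ⟨C, k, -, hgC⟩ := hg.exists_norm_le_mul
  refine ⟨k, fun x => ne_top_of_le_ne_top (ofReal_ne_top (r := C * (1 + ‖x‖) ^ k)) ?_⟩
  refine iSup_le fun y => ?_
  beta_reduce
  rw [edist_comm, edist_eq_enorm_sub, one_add_enorm_rpow, ← ofReal_norm,
    ← ofReal_mul (by positivity), Real.rpow_neg (by positivity), Real.rpow_natCast]
  refine ofReal_le_ofReal ((inv_mul_le_iff₀ (by positivity)).2 ?_)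
  rw [mul_comm]
  exact hgC x y

end PolynomialGrowth

section SchwartzDecay

variable {V E : Type*} [NormedAddCommGroup V] [NormedSpace ℝ V] [NormedAddCommGroup E]
  [NormedSpace ℝ E]

theorem exists_enorm_schwartz_le (ψ : 𝓢(V, E)) (a : ℝ) :
    ∃ K : ℝ≥0, ∀ x, ‖ψ x‖ₑ ≤ K * (1 + ‖x‖ₑ) ^ (-a) := by
  set N := ⌈a⌉₊
  set C := 2 ^ N * (Finset.Iic (N, 0)).sup (fun m => SchwartzMap.seminorm ℝ m.1 m.2) ψ
  refine ⟨C.toNNReal, fun x => ?_⟩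
  have hdecay : (1 + ‖x‖) ^ N * ‖ψ x‖ ≤ C := by
    simpa using SchwartzMap.one_add_le_sup_seminorm_apply (𝕜 := ℝ) (m := (N, 0)) (k := N) (n := 0)
      le_rfl le_rfl ψ x
  rw [one_add_enorm_rpow, ← ofReal_norm]
  change _ ≤ ENNReal.ofReal C * _
  rw [← ofReal_mul' (by positivity)]
  refine ofReal_le_ofReal ?_
  calc ‖ψ x‖ ≤ C * ((1 + ‖x‖) ^ N)⁻¹ := by
        rwa [← div_eq_mul_inv, le_div_iff₀ (by positivity), mul_comm]
    _ ≤ C * (1 + ‖x‖) ^ (-a) := by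
        rw [← Real.rpow_natCast, ← Real.rpow_neg (by positivity)]
        have : 0 ≤ C := by positivity
        gcongr
        · linarith [norm_nonneg x]
        · exact Nat.le_ceil a

theorem integrable_one_add_norm_pow_mul_schwartz [MeasurableSpace V] [BorelSpace V]
    [SecondCountableTopology V] (μ : Measure V) [μ.HasTemperateGrowth] (ψ : 𝓢(V, E)) (k : ℕ) :
    Integrable (fun x => (1 + ‖x‖) ^ k * ‖ψ x‖) μ := by
  refine ((ψ.integrable (μ := μ)).norm.add (ψ.integrable_pow_mul μ k) |>.const_mul
    (2 ^ (k - 1))).mono' ?_ (.of_forall fun x => ?_)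
  · have := ψ.continuous
    fun_prop
  · rw [Real.norm_of_nonneg (by positivity)]
    calc (1 + ‖x‖) ^ k * ‖ψ x‖ ≤ 2 ^ (k - 1) * (1 ^ k + ‖x‖ ^ k) * ‖ψ x‖ := by
          gcongr; exact add_pow_le zero_le_one (norm_nonneg x) k
      _ = 2 ^ (k - 1) * (‖ψ x‖ + ‖x‖ ^ k * ‖ψ x‖) := by ring

end SchwartzDecay

section SpectralProjection

open scoped FourierTransform Convolution ContDiff Pointwise

open Distribution

variable {V E : Type*} [NormedAddCommGroup V] [InnerProductSpace ℝ V] [FiniteDimensional ℝ V]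
  [MeasurableSpace V] [BorelSpace V] [NormedAddCommGroup E] [NormedSpace ℂ E]

/-- The Fourier transform of the tempered distribution given by the function `g` vanishes off `s`:
pairing it with a Schwartz function `φ` means integrating `𝓕 φ` against `g`. -/
def FourierSupportedIn (g : V → E) (s : Set V) : Prop :=
  IsVanishingOn (fun φ : 𝓢(V, ℂ) => ∫ x, 𝓕 φ x • g x) sᶜ

theorem fourierSupportedIn_smul_closedBall_iff {g : V → ℂ} {t R : ℝ} (ht : 0 ≤ t) (hR : 0 ≤ R) :
    FourierSupportedIn g (t • Metric.closedBall (0 : V) R) ↔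
      ∀ φ : 𝓢(V, ℂ), (∀ ξ ∈ tsupport ⇑φ, t * R < ‖ξ‖) → ∫ x, g x * 𝓕 φ x = 0 := by
  rw [smul_closedBall _ _ hR, smul_zero, Real.norm_of_nonneg ht]
  simp only [FourierSupportedIn, IsVanishingOn, Set.subset_def, Set.mem_compl_iff,
    mem_closedBall_zero_iff, not_le, smul_eq_mul, mul_comm (g _)]

theorem exists_schwartz_eq_one_on_ball (V : Type*) [NormedAddCommGroup V]
    [InnerProductSpace ℝ V] [FiniteDimensional ℝ V] {R : ℝ} (hR : 0 < R) :
    ∃ χ : 𝓢(V, ℂ), ∀ ξ ∈ Metric.ball (0 : V) R, χ ξ = 1 := by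
  let b : ContDiffBump (0 : V) := ⟨R, R + 1, hR, lt_add_one R⟩
  have hsupp : HasCompactSupport (Complex.ofRealCLM ∘ b) := b.hasCompactSupport.comp_left rfl
  have hsmooth : ContDiff ℝ ∞ (Complex.ofRealCLM ∘ b) :=
    Complex.ofRealCLM.contDiff.comp b.contDiff
  refine ⟨hsupp.toSchwartzMap hsmooth, fun ξ hξ => ?_⟩
  simp [b.one_of_mem_closedBall (Metric.ball_subset_closedBall hξ)]

theorem fourierInv_schwartz_convolution_apply {F₁ F₂ F₃ : Type*}
    [NormedAddCommGroup F₁] [NormedSpace ℂ F₁] [NormedAddCommGroup F₂] [NormedSpace ℂ F₂]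
    [NormedAddCommGroup F₃] [NormedSpace ℂ F₃] [CompleteSpace F₃] (B : F₁ →L[ℂ] F₂ →L[ℂ] F₃)
    (φ : 𝓢(V, F₁)) (θ : 𝓢(V, F₂)) (ξ : V) :
    𝓕⁻ (SchwartzMap.convolution B φ θ) ξ = B (𝓕⁻ φ ξ) (𝓕⁻ θ ξ) := by
  simp [fourierInv_apply_eq, SchwartzMap.fourier_convolution]

variable {g : V → E}

theorem HasPolynomialGrowth.integrable_schwartz_smul (hg : HasPolynomialGrowth g)
    (hgc : Continuous g) (φ : 𝓢(V, ℂ)) : Integrable fun x => φ x • g x := by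
  obtain ⟨C, k, hgC⟩ := hg
  have hφ := φ.continuous
  refine ((integrable_one_add_norm_pow_mul_schwartz volume φ k).const_mul C).mono'
    (Continuous.aestronglyMeasurable (by fun_prop)) (.of_forall fun x => ?_)
  calc ‖φ x • g x‖ = ‖φ x‖ * ‖g x‖ := norm_smul _ _
    _ ≤ ‖φ x‖ * (C * (1 + ‖x‖) ^ k) := by gcongr; exact hgC x
    _ = C * ((1 + ‖x‖) ^ k * ‖φ x‖) := by ring

theorem HasPolynomialGrowth.continuous_integral_schwartz_smul (hg : HasPolynomialGrowth g)
    (hgc : Continuous g) (ψ : 𝓢(V, ℂ)) : Continuous fun z => ∫ y, ψ (y - z) • g y := by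
  obtain ⟨C, k, _, hgC⟩ := hg.exists_norm_le_mul
  have hψ := ψ.continuous
  have htranslate : (fun z => ∫ y, ψ (y - z) • g y) = fun z => ∫ t, ψ t • g (t + z) := by
    ext z
    rw [← integral_add_right_eq_self _ z]
    simp only [add_sub_cancel_right]
  rw [htranslate, continuous_iff_continuousAt]
  intro z₀
  refine continuousAt_of_dominated
    (bound := fun t => C * (2 + ‖z₀‖) ^ k * ((1 + ‖t‖) ^ k * ‖ψ t‖)) ?_ ?_ ?_ ?_
  · exact .of_forall fun z => Continuous.aestronglyMeasurable (by fun_prop)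
  · filter_upwards [Metric.ball_mem_nhds z₀ one_pos] with z hz
    refine .of_forall fun t => ?_
    have hz' : 1 + ‖z‖ ≤ 2 + ‖z₀‖ := by
      linarith [norm_le_norm_add_norm_sub' z z₀, mem_ball_iff_norm.1 hz]
    calc ‖ψ t • g (t + z)‖ = ‖ψ t‖ * ‖g (t + z)‖ := norm_smul _ _
      _ ≤ ‖ψ t‖ * (C * (1 + ‖z‖) ^ k * (1 + ‖t + z - z‖) ^ k) := by gcongr; exact hgC z (t + z)
      _ ≤ ‖ψ t‖ * (C * (2 + ‖z₀‖) ^ k * (1 + ‖t‖) ^ k) := by rw [add_sub_cancel_right]; gcongr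
      _ = C * (2 + ‖z₀‖) ^ k * ((1 + ‖t‖) ^ k * ‖ψ t‖) := by ring
  · exact (integrable_one_add_norm_pow_mul_schwartz volume ψ k).const_mul _
  · exact .of_forall fun t => by fun_prop

theorem HasPolynomialGrowth.integrable_prod_schwartz_smul (hg : HasPolynomialGrowth g)
    (hgc : Continuous g) (ψ θ : 𝓢(V, ℂ)) :
    Integrable (fun p : V × V => (ψ (p.1 - p.2) * θ p.2) • g p.1) (volume.prod volume) := by
  obtain ⟨C, k, -, hgC⟩ := hg.exists_norm_le_mul
  have hψ := ψ.continuous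
  have hθ := θ.continuous
  have hconv := ((integrable_one_add_norm_pow_mul_schwartz volume θ k).convolution_integrand
    (ContinuousLinearMap.mul ℝ ℝ) (integrable_one_add_norm_pow_mul_schwartz volume ψ k)).const_mul C
  refine hconv.mono' (Continuous.aestronglyMeasurable (by fun_prop)) (.of_forall fun ⟨y, z⟩ => ?_)
  calc ‖(ψ (y - z) * θ z) • g y‖ = ‖ψ (y - z)‖ * ‖θ z‖ * ‖g y‖ := by rw [norm_smul, norm_mul]
    _ ≤ ‖ψ (y - z)‖ * ‖θ z‖ * (C * (1 + ‖z‖) ^ k * (1 + ‖y - z‖) ^ k) := by gcongr; exact hgC z y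
    _ = C * ((1 + ‖z‖) ^ k * ‖θ z‖ * ((1 + ‖y - z‖) ^ k * ‖ψ (y - z)‖)) := by ring

theorem HasPolynomialGrowth.integral_convolution_smul [CompleteSpace E] (hg : HasPolynomialGrowth g)
    (hgc : Continuous g) (ψ θ : 𝓢(V, ℂ)) :
    ∫ y, SchwartzMap.convolution (ContinuousLinearMap.mul ℂ ℂ) ψ θ y • g y =
      ∫ z, θ z • ∫ y, ψ (y - z) • g y := by
  calc ∫ y, SchwartzMap.convolution (ContinuousLinearMap.mul ℂ ℂ) ψ θ y • g y
      = ∫ y, ∫ z, (ψ (y - z) * θ z) • g y := by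
        refine integral_congr_ae (.of_forall fun y => ?_)
        simp only [SchwartzMap.convolution_apply, MeasureTheory.convolution_eq_swap,
          ContinuousLinearMap.mul_apply', integral_smul_const]
    _ = ∫ z, ∫ y, (ψ (y - z) * θ z) • g y :=
        integral_integral_swap (hg.integrable_prod_schwartz_smul hgc ψ θ)
    _ = ∫ z, θ z • ∫ y, ψ (y - z) • g y := by
        simp only [mul_comm (ψ _), mul_smul, integral_smul]

-- The inverse Fourier transform `(1 - χ) 𝓕⁻ θ` of `θ - 𝓕 χ ⋆ θ` vanishes on the neighbourhood
-- `U` of the spectrum of `g`.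
theorem FourierSupportedIn.integral_schwartz_smul_eq_convolution {s U : Set V}
    (hsupp : FourierSupportedIn g s) (hg : HasPolynomialGrowth g) (hgc : Continuous g)
    (hU : IsOpen U) (hsU : s ⊆ U) {χ : 𝓢(V, ℂ)} (hχ : ∀ ξ ∈ U, χ ξ = 1) (θ : 𝓢(V, ℂ)) :
    ∫ x, θ x • g x =
      ∫ x, SchwartzMap.convolution (ContinuousLinearMap.mul ℂ ℂ) (𝓕 χ) θ x • g x := by
  set κ := SchwartzMap.convolution (ContinuousLinearMap.mul ℂ ℂ) (𝓕 χ) θ with hκ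
  have hinv : (𝓕⁻ (θ - κ) : 𝓢(V, ℂ)) = 𝓕⁻ θ - 𝓕⁻ κ :=
    map_sub (FourierTransform.fourierInvCLM ℂ 𝓢(V, ℂ)) θ κ
  have hvanish : ∀ ξ ∈ U, (𝓕⁻ (θ - κ) : 𝓢(V, ℂ)) ξ = 0 := fun ξ hξ => by
    rw [hinv, sub_apply, hκ, fourierInv_schwartz_convolution_apply,
      FourierTransform.fourierInv_fourier_eq, hχ ξ hξ, ContinuousLinearMap.mul_apply', one_mul,
      sub_self]
  have hsub : tsupport ⇑(𝓕⁻ (θ - κ) : 𝓢(V, ℂ)) ⊆ sᶜ := fun ξ hξ hξs =>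
    notMem_tsupport_iff_eventuallyEq.2 (Filter.eventually_of_mem (hU.mem_nhds (hsU hξs)) hvanish) hξ
  have hzero : ∫ x, (θ x - κ x) • g x = 0 := by
    simpa only [FourierTransform.fourier_fourierInv_eq, sub_apply] using hsupp _ hsub
  simp only [sub_smul] at hzero
  rwa [integral_sub (hg.integrable_schwartz_smul hgc θ) (hg.integrable_schwartz_smul hgc κ),
    sub_eq_zero] at hzero

theorem FourierSupportedIn.eq_integral_fourier_smul [CompleteSpace E] {s U : Set V}
    (hsupp : FourierSupportedIn g s) (hg : HasPolynomialGrowth g) (hgc : Continuous g)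
    (hU : IsOpen U) (hsU : s ⊆ U) {χ : 𝓢(V, ℂ)} (hχ : ∀ ξ ∈ U, χ ξ = 1) (x : V) :
    g x = ∫ y, 𝓕 χ (y - x) • g y := by
  have hcont := hg.continuous_integral_schwartz_smul hgc (𝓕 χ)
  suffices hae : ∀ᵐ z, g z = ∫ y, 𝓕 χ (y - z) • g y from
    congrFun ((hgc.ae_eq_iff_eq volume hcont).1 hae) x
  refine ae_eq_of_integral_contDiff_smul_eq hgc.locallyIntegrable hcont.locallyIntegrable ?_
  intro η hη hηc
  have hηc' : HasCompactSupport (Complex.ofRealCLM ∘ η) := hηc.comp_left rfl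
  have hη' : ContDiff ℝ ∞ (Complex.ofRealCLM ∘ η) := by fun_prop
  exact (hsupp.integral_schwartz_smul_eq_convolution hg hgc hU hsU hχ
    (hηc'.toSchwartzMap hη')).trans (hg.integral_convolution_smul hgc _ _)

end SpectralProjection

section KernelBound

open scoped FourierTransform

open Module

variable {V : Type*} [NormedAddCommGroup V] [InnerProductSpace ℝ V] [FiniteDimensional ℝ V]
  [MeasurableSpace V] [BorelSpace V]

theorem exists_enorm_le_mul_etaConv (E : Type*) [NormedAddCommGroup E] [NormedSpace ℂ E]
    [CompleteSpace E] {s : Set V} (hs : Bornology.IsBounded s) :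
    ∃ K : ℝ → ℝ≥0, ∀ g : V → E, Continuous g → HasPolynomialGrowth g → FourierSupportedIn g s →
      ∀ a x, ‖g x‖ₑ ≤ K a * etaConv volume a (fun y => ‖g y‖ₑ) x := by
  obtain ⟨R, hR, hsR⟩ := hs.subset_ball_lt 0 0
  obtain ⟨χ, hχ⟩ := exists_schwartz_eq_one_on_ball V hR
  choose K hK using exists_enorm_schwartz_le (𝓕 χ)
  refine ⟨K, fun g hgc hg hsupp a x => ?_⟩
  calc ‖g x‖ₑ = ‖∫ y, 𝓕 χ (y - x) • g y‖ₑ := by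
        rw [← hsupp.eq_integral_fourier_smul hg hgc Metric.isOpen_ball hsR hχ]
    _ ≤ ∫⁻ y, ‖𝓕 χ (y - x) • g y‖ₑ := enorm_integral_le_lintegral_enorm _
    _ ≤ ∫⁻ y, K a * ((1 + edist x y) ^ (-a) * ‖g y‖ₑ) := by
        gcongr with y
        rw [enorm_smul, ← mul_assoc, edist_comm, edist_eq_enorm_sub]
        gcongr
        exact hK a (y - x)
    _ = K a * etaConv volume a (fun y => ‖g y‖ₑ) x := lintegral_const_mul' _ _ coe_ne_top

theorem exists_enorm_le_mul_etaConv_rpow (E : Type*) [NormedAddCommGroup E] [NormedSpace ℂ E]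
    [CompleteSpace E] {s : Set V} (hs : Bornology.IsBounded s) {r : ℝ} (hr : 0 < r) (m : ℝ) :
    ∃ c : ℝ≥0∞, 0 < c ∧ c < ∞ ∧ ∀ g : V → E, Continuous g → HasPolynomialGrowth g →
      FourierSupportedIn g s →
      ∀ x, ‖g x‖ₑ ≤ c * etaConv volume m (fun y => ‖g y‖ₑ ^ r) x ^ (1 / r) := by
  obtain ⟨K, hK⟩ := exists_enorm_le_mul_etaConv E hs
  set M := max m (finrank ℝ V + 1)
  have hM : finrank ℝ V < M := (lt_add_one _).trans_le (le_max_right _ _)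
  obtain ⟨c, hc0, hc, hcK⟩ := exists_le_mul_etaConv_rpow volume K hr
    ((Nat.cast_nonneg _).trans hM.le) (finite_integral_one_add_norm hM).ne
    fun x => (etaConv_one_eq volume M x).le
  refine ⟨c, hc0, hc, fun g hgc hg hsupp x => ?_⟩
  calc ‖g x‖ₑ ≤ c * etaConv volume M (fun y => ‖g y‖ₑ ^ r) x ^ (1 / r) :=
        hcK _ hgc.enorm.measurable (fun a _ => hK g hgc hg hsupp a)
          hg.exists_peetreMaximal_ne_top x
    _ ≤ c * etaConv volume m (fun y => ‖g y‖ₑ ^ r) x ^ (1 / r) := by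
        gcongr
        exact etaConv_anti (le_max_left _ _) _ _ _

end KernelBound

section Dilation

open scoped FourierTransform Pointwise

open Module

variable {V E : Type*} [NormedAddCommGroup V] [MeasurableSpace V] [BorelSpace V]

theorem lintegral_comp_inv_smul [NormedSpace ℝ V] [FiniteDimensional ℝ V] (μ : Measure V)
    [μ.IsAddHaarMeasure] (f : V → ℝ≥0∞) {t : ℝ} (ht : t ≠ 0) :
    ∫⁻ x, f (t⁻¹ • x) ∂μ = ENNReal.ofReal |t ^ finrank ℝ V| * ∫⁻ x, f x ∂μ := by
  rw [← (measurableEmbedding_const_smul₀ (inv_ne_zero ht)).lintegral_map,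
    Measure.map_addHaar_smul μ (inv_ne_zero ht), lintegral_smul_measure, inv_pow, inv_inv,
    smul_eq_mul]

theorem etaConv_comp_inv_smul [NormedSpace ℝ V] [FiniteDimensional ℝ V] (μ : Measure V)
    [μ.IsAddHaarMeasure] {t : ℝ} (ht : 0 < t) (m : ℝ) (f : V → ℝ≥0∞) (x : V) :
    etaConv μ m (fun y => f (t⁻¹ • y)) (t • x) =
      ∫⁻ y, ENNReal.ofReal (t ^ finrank ℝ V * (1 + t * ‖x - y‖) ^ (-m)) * f y ∂μ := by
  calc etaConv μ m (fun y => f (t⁻¹ • y)) (t • x)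
      = ∫⁻ y, (1 + edist (t • x) (t • t⁻¹ • y)) ^ (-m) * f (t⁻¹ • y) ∂μ := by
        simp only [etaConv, smul_inv_smul₀ ht.ne']
    _ = ENNReal.ofReal (t ^ finrank ℝ V) * ∫⁻ y, (1 + edist (t • x) (t • y)) ^ (-m) * f y ∂μ := by
        rw [lintegral_comp_inv_smul μ (fun y => (1 + edist (t • x) (t • y)) ^ (-m) * f y)
          ht.ne', abs_of_pos (by positivity)]
    _ = _ := by
        rw [← lintegral_const_mul' _ _ ofReal_ne_top]
        simp only [edist_eq_enorm_sub, ← smul_sub, one_add_enorm_rpow, norm_smul,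
          Real.norm_of_nonneg ht.le, ofReal_mul (pow_nonneg ht.le _), mul_assoc]

variable [InnerProductSpace ℝ V] [FiniteDimensional ℝ V] [NormedAddCommGroup E] [NormedSpace ℂ E]

theorem fourier_comp_inv_smul (f : V → E) {t : ℝ} (ht : t ≠ 0) (x : V) :
    𝓕 (fun ξ => f (t⁻¹ • ξ)) x = |t ^ finrank ℝ V| • 𝓕 f (t • x) := by
  rw [Real.fourier_eq, Real.fourier_eq, ← Measure.integral_comp_inv_smul]
  congr! 5
  rw [inner_smul_left, inner_smul_right]
  simp [ht]

theorem FourierSupportedIn.comp_inv_smul {g : V → E} {s : Set V} {t : ℝ} (ht : t ≠ 0)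
    (hg : FourierSupportedIn g (t • s)) : FourierSupportedIn (fun x => g (t⁻¹ • x)) s := by
  intro φ hφ
  let A : V ≃L[ℝ] V := ContinuousLinearEquiv.smulLeft (Units.mk0 t⁻¹ (inv_ne_zero ht))
  let φt : 𝓢(V, ℂ) := compCLMOfContinuousLinearEquiv ℂ A φ
  have hφt y : 𝓕 φt y = |t ^ finrank ℝ V| • 𝓕 φ (t • y) := by
    rw [fourier_coe, fourier_coe, ← fourier_comp_inv_smul _ ht]
    rfl
  have htsupport : tsupport φt ⊆ (t • s)ᶜ := by
    rw [show ⇑φt = φ ∘ A.toHomeomorph from rfl, tsupport_comp_eq_preimage]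
    rintro ξ hξ ⟨ζ, hζ, rfl⟩
    exact hφ (by simpa [A, ht] using hξ) hζ
  calc ∫ x, 𝓕 φ x • g (t⁻¹ • x) = ∫ x, 𝓕 φ (t • t⁻¹ • x) • g (t⁻¹ • x) := by
        simp only [smul_inv_smul₀ ht]
    _ = ∫ y, 𝓕 φt y • g y := by
        rw [Measure.integral_comp_inv_smul volume fun y => 𝓕 φ (t • y) • g y, ← integral_smul]
        simp only [hφt, smul_assoc]
    _ = 0 := hg φt htsupport

end Dilation

section RTrick

open scoped Pointwise

open Module

theorem r_trick_general {V E : Type*} [NormedAddCommGroup V] [InnerProductSpace ℝ V]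
    [FiniteDimensional ℝ V] [MeasurableSpace V] [BorelSpace V] [NormedAddCommGroup E]
    [NormedSpace ℂ E] [CompleteSpace E] {s : Set V} (hs : Bornology.IsBounded s) {r : ℝ}
    (hr : 0 < r) (m : ℝ) :
    ∃ c : ℝ≥0∞, 0 < c ∧ c < ∞ ∧ ∀ t : ℝ, 0 < t → ∀ g : V → E, Continuous g →
      HasPolynomialGrowth g → FourierSupportedIn g (t • s) →
      ∀ x, ‖g x‖ₑ ≤ c * (∫⁻ y,
        ENNReal.ofReal (t ^ finrank ℝ V * (1 + t * ‖x - y‖) ^ (-m)) * ‖g y‖ₑ ^ r) ^ (1 / r) := by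
  obtain ⟨c, hc0, hc, hbound⟩ := exists_enorm_le_mul_etaConv_rpow E hs hr m
  refine ⟨c, hc0, hc, fun t ht g hgc hg hsupp x => ?_⟩
  have hdilated := hbound (fun x => g (t⁻¹ • x)) (by fun_prop) (hg.comp_smul t⁻¹)
    (hsupp.comp_inv_smul ht.ne') (t • x)
  rwa [inv_smul_smul₀ ht.ne', etaConv_comp_inv_smul volume ht m (fun y => ‖g y‖ₑ ^ r)] at hdilated

end RTrick

/-- The r-trick: for `r > 0`, `v ∈ ℕ₀`, `m > n`, there is `c = c(r,m,n) > 0` such that every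
(polynomially growing, continuous) `g` with `supp 𝓕g ⊆ {|ξ| ≤ 2^{v+1}}` satisfies
`|g(x)| ≤ c (η_{v,m} * |g|^r (x))^{1/r}`, where `η_{v,m}(x) = 2^{nv}(1 + 2^v|x|)^{-m}`. -/
theorem r_trick (n : ℕ) (r m : ℝ) (hr : 0 < r) (hm : (n : ℝ) < m) :
    ∃ c : ℝ≥0∞, 0 < c ∧ c < ⊤ ∧
      ∀ (v : ℕ) (g : EuclideanSpace ℝ (Fin n) → ℂ),
        Continuous g →
        (∃ (C : ℝ) (k : ℕ), ∀ x, ‖g x‖ ≤ C * (1 + ‖x‖) ^ k) →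
        (∀ φ : 𝓢(EuclideanSpace ℝ (Fin n), ℂ),
          (∀ ξ ∈ tsupport ⇑φ, (2 : ℝ) ^ (v + 1) < ‖ξ‖) →
          ∫ x, g x * fourierTransformCLM ℂ φ x = 0) →
        ∀ x : EuclideanSpace ℝ (Fin n),
          (‖g x‖₊ : ℝ≥0∞) ≤
            c * (∫⁻ y, ENNReal.ofReal ((2 : ℝ) ^ (n * v) * (1 + 2 ^ v * ‖x - y‖) ^ (-m))
                * (‖g y‖₊ : ℝ≥0∞) ^ r) ^ (1 / r) := by
  obtain ⟨c, hc0, hc, hbound⟩ := r_trick_general (E := ℂ)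
    (Metric.isBounded_closedBall (x := (0 : EuclideanSpace ℝ (Fin n))) (r := 2)) hr m
  exact ⟨c, hc0, hc, fun v g hgc hg hsupp x => by
    simpa only [enorm_eq_nnnorm, finrank_euclideanSpace_fin, ← pow_mul'] using
      hbound (2 ^ v) (by positivity) g hgc hg ((fourierSupportedIn_smul_closedBall_iff
        (by positivity) zero_le_two).2 (pow_succ (2 : ℝ) v ▸ hsupp)) x⟩
end
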